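/- arXiv:1910.12568 — 2 statements merged into one kernel-verified Lean document; each statement's English description precedes it below -/
import Mathlib

section
/- Every proper gradient map f : ℝ² → ℝ² is proper gradient homotopic to a generic proper gradient map. -/
open Set Metric Filter

noncomputable section

/-- Euclidean space `ℝⁿ`. -/
abbrev Euc (n : ℕ) := EuclideanSpace ℝ (Fin n)

/-- A map `f : ℝⁿ → ℝⁿ` is gradient if it is the gradient of a `C¹` function `φ : ℝⁿ → ℝ`. -/
def IsGradient {n : ℕ} (f : Euc n → Euc n) : Prop :=
  ∃ φ : Euc n → ℝ, ContDiff ℝ 1 φ ∧ ∀ x, gradient φ x = f x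

/-- A map is proper if preimages of compact sets are compact (our maps are continuous anyway). -/
def IsProper {n : ℕ} (f : Euc n → Euc n) : Prop :=
  ∀ K : Set (Euc n), IsCompact K → IsCompact (f ⁻¹' K)

/-- `h : [0,1] × ℝⁿ → ℝⁿ` is a gradient homotopy: it is continuous, each `h t` is a
gradient map, and the zero set `h⁻¹(0)` (within `[0,1] × ℝⁿ`) is compact. -/
def IsGradientHomotopy {n : ℕ} (h : ℝ → Euc n → Euc n) : Prop :=
  ContinuousOn (fun p : ℝ × Euc n => h p.1 p.2) (Icc 0 1 ×ˢ univ) ∧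
  (∀ t ∈ Icc (0:ℝ) 1, IsGradient (h t)) ∧
  IsCompact {p : ℝ × Euc n | p.1 ∈ Icc (0:ℝ) 1 ∧ h p.1 p.2 = 0}

/-- Two maps are gradient homotopic if some gradient homotopy connects them. -/
def GradientHomotopic {n : ℕ} (f g : Euc n → Euc n) : Prop :=
  ∃ h : ℝ → Euc n → Euc n, IsGradientHomotopy h ∧ h 0 = f ∧ h 1 = g

/-- `h : [0,1] × ℝⁿ → ℝⁿ` is a proper gradient homotopy: it is continuous, each `h t` is a
gradient map, and `h` is proper as a map on `[0,1] × ℝⁿ`. -/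
def IsProperGradientHomotopy {n : ℕ} (h : ℝ → Euc n → Euc n) : Prop :=
  ContinuousOn (fun p : ℝ × Euc n => h p.1 p.2) (Icc 0 1 ×ˢ univ) ∧
  (∀ t ∈ Icc (0:ℝ) 1, IsGradient (h t)) ∧
  (∀ K : Set (Euc n), IsCompact K →
    IsCompact {p : ℝ × Euc n | p.1 ∈ Icc (0:ℝ) 1 ∧ h p.1 p.2 ∈ K})

/-- Two maps are proper gradient homotopic if some proper gradient homotopy connects them. -/
def ProperGradientHomotopic {n : ℕ} (f g : Euc n → Euc n) : Prop :=
  ∃ h : ℝ → Euc n → Euc n, IsProperGradientHomotopy h ∧ h 0 = f ∧ h 1 = g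

open scoped RealInnerProductSpace

/-- `p` is a source of the gradient map `f = ∇φ`: a zero of `f` at which the Hessian of `φ`,
i.e. the derivative of `f`, is positive definite. -/
def IsSourceAt (f : Euc 2 → Euc 2) (p : Euc 2) : Prop :=
  f p = 0 ∧ ∀ v : Euc 2, v ≠ 0 → 0 < ⟪fderiv ℝ f p v, v⟫

/-- `p` is a sink of the gradient map `f = ∇φ`: a zero of `f` at which the Hessian of `φ`
is negative definite. -/
def IsSinkAt (f : Euc 2 → Euc 2) (p : Euc 2) : Prop :=
  f p = 0 ∧ ∀ v : Euc 2, v ≠ 0 → ⟪fderiv ℝ f p v, v⟫ < 0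

/-- `p` is a saddle of `f`: a zero of `f` which is neither a source nor a sink. -/
def IsSaddleAt (f : Euc 2 → Euc 2) (p : Euc 2) : Prop :=
  f p = 0 ∧ ¬ IsSourceAt f p ∧ ¬ IsSinkAt f p

/-- `γ : ℝ → ℝ²` is a (full) trajectory of the local flow of `ẋ = f(x)`. -/
def IsTrajectory (f : Euc 2 → Euc 2) (γ : ℝ → Euc 2) : Prop :=
  ∀ t : ℝ, HasDerivAt γ (f (γ t)) t

/-- No trajectory of the local flow of `ẋ = f(x)` connects two (distinct) saddle points. -/
def NoSaddleConnection (f : Euc 2 → Euc 2) : Prop :=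
  ¬ ∃ (γ : ℝ → Euc 2) (p q : Euc 2), IsTrajectory f γ ∧
      IsSaddleAt f p ∧ IsSaddleAt f q ∧ p ≠ q ∧
      Filter.Tendsto γ Filter.atBot (nhds p) ∧ Filter.Tendsto γ Filter.atTop (nhds q)

/-- `f` is a generic gradient map with potential `φ`: `φ` is `C²` with `∇φ = f`, all critical
points are nondegenerate, distinct critical points have distinct critical values, and no
trajectory of the local flow connects two saddle points. -/
def IsGenericGradientPair (φ : Euc 2 → ℝ) (f : Euc 2 → Euc 2) : Prop :=
  ContDiff ℝ 2 φ ∧ (∀ x, gradient φ x = f x) ∧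
  (∀ p : Euc 2, f p = 0 → Function.Bijective (fderiv ℝ f p)) ∧
  (∀ p q : Euc 2, f p = 0 → f q = 0 → φ p = φ q → p = q) ∧
  NoSaddleConnection f

/-- `f` is a generic gradient map. -/
def IsGenericGradient (f : Euc 2 → Euc 2) : Prop :=
  ∃ φ : Euc 2 → ℝ, IsGenericGradientPair φ f

/-- The set `A_f` of sources and sinks of `f`. -/
def sourceSinkSet (f : Euc 2 → Euc 2) : Set (Euc 2) :=
  {p | IsSourceAt f p ∨ IsSinkAt f p}

/-- The set `B_f` of saddles of `f`. -/
def saddleSet (f : Euc 2 → Euc 2) : Set (Euc 2) :=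
  {p | IsSaddleAt f p}

/-- `z ∈ E_x⁻`: the trajectory through `z` tends to `x` as `t → -∞`. -/
def InBackwardBasin (f : Euc 2 → Euc 2) (x z : Euc 2) : Prop :=
  ∃ γ : ℝ → Euc 2, γ 0 = z ∧ (∀ t ∈ Set.Iic (0:ℝ), HasDerivAt γ (f (γ t)) t) ∧
    Filter.Tendsto γ Filter.atBot (nhds x)

/-- `z ∈ E_y⁺` for a stationary point `y`: the trajectory through `z` tends to `y` in
forward time.  (A forward trajectory converging to a stationary point exists for all
`t ≥ 0`.) -/
def InForwardBasin (f : Euc 2 → Euc 2) (y z : Euc 2) : Prop :=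
  ∃ γ : ℝ → Euc 2, γ 0 = z ∧ (∀ t ∈ Set.Ici (0:ℝ), HasDerivAt γ (f (γ t)) t) ∧
    Filter.Tendsto γ Filter.atTop (nhds y)

/-- `z ∈ E_∞⁺`: the trajectory through `z` escapes to infinity as `t → ω_z`, where
`ω_z ∈ (0, ∞]` is the endpoint of the maximal forward interval of existence. -/
def EscapesToInfinity (f : Euc 2 → Euc 2) (z : Euc 2) : Prop :=
  ∃ γ : ℝ → Euc 2, γ 0 = z ∧
    (((∀ t ∈ Set.Ici (0:ℝ), HasDerivAt γ (f (γ t)) t) ∧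
        Filter.Tendsto (fun t => ‖γ t‖) Filter.atTop Filter.atTop) ∨
      (∃ ω : ℝ, 0 < ω ∧ (∀ t ∈ Set.Ico (0:ℝ) ω, HasDerivAt γ (f (γ t)) t) ∧
        Filter.Tendsto (fun t => ‖γ t‖) (nhdsWithin ω (Set.Iio ω)) Filter.atTop))

/-- The set of asymptotic backward directions `V_x^P ⊆ S¹`: unit vectors
`v_z = lim_{t → -∞} f(η^t z)/|f(η^t z)|` over points `z ∈ E_x⁻` satisfying `P`
(membership in `E_y⁺` or `E_∞⁺`). -/
def dirSet (f : Euc 2 → Euc 2) (x : Euc 2) (P : Euc 2 → Prop) : Set (Euc 2) :=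
  {v | ∃ (z : Euc 2) (γ : ℝ → Euc 2), γ 0 = z ∧
    (∀ t ∈ Set.Iic (0:ℝ), HasDerivAt γ (f (γ t)) t) ∧
    Filter.Tendsto γ Filter.atBot (nhds x) ∧ P z ∧
    Filter.Tendsto (fun t => (‖f (γ t)‖)⁻¹ • f (γ t)) Filter.atBot (nhds v)}

/-- `V_x^y` for a stationary point `y`. -/
def dirSetTo (f : Euc 2 → Euc 2) (x y : Euc 2) : Set (Euc 2) :=
  dirSet f x (InForwardBasin f y)

/-- `V_x^∞`. -/
def dirSetInf (f : Euc 2 → Euc 2) (x : Euc 2) : Set (Euc 2) :=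
  dirSet f x (EscapesToInfinity f)

/-! Perturbing the potential so that its gradient moves by a bounded amount keeps the map proper,
and the straight line between the two gradients is then a proper gradient homotopy; so it suffices
to make the potential generic by such perturbations. Mollifying the pieces of a locally finite
decomposition makes it smooth, and by Sard's theorem a small linear term makes it Morse; it then has
finitely many critical points. Near each of them it can be replaced by its second order Taylor
polynomial plus a small constant, which separates the critical values.

Saddle connections are broken in order of decreasing critical value. Near a saddle `p`, where the
potential is `ψ p + (a u² - b v²) / 2`, a trajectory leaving `p` along the `u`-axis is pushed by a
perturbation of size `s` to a height `v ∈ (0, s / b]` before it reaches the level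
`ψ p + 6 a r²`. Above that level it is a trajectory of the unperturbed flow, and only finitely many
points of the level flow into a saddle, so for small `s` the trajectory misses all of them. -/

section GradientCalculus

variable {E : Type*} [NormedAddCommGroup E] [InnerProductSpace ℝ E] [CompleteSpace E]
  {φ ψ : E → ℝ} {a b x : E}

lemma contDiff_gradient {m n : WithTop ℕ∞} (hψ : ContDiff ℝ n ψ) (hmn : m + 1 ≤ n) :
    ContDiff ℝ m (gradient ψ) :=
  (InnerProductSpace.toDual ℝ E).symm.contDiff.comp (hψ.fderiv_right hmn)

lemma continuous_gradient (hψ : ContDiff ℝ 1 ψ) : Continuous (gradient ψ) :=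
  (contDiff_gradient (m := 0) hψ (zero_add 1).le).continuous

lemma hasGradientAt_of_contDiff (hψ : ContDiff ℝ 1 ψ) (x : E) :
    HasGradientAt ψ (gradient ψ x) x :=
  (hψ.differentiable one_ne_zero x).hasGradientAt

lemma hasGradientAt_add (hφ : HasGradientAt φ a x) (hψ : HasGradientAt ψ b x) :
    HasGradientAt (fun y ↦ φ y + ψ y) (a + b) x := by
  rw [hasGradientAt_iff_hasFDerivAt, map_add]
  exact hφ.hasFDerivAt.add hψ.hasFDerivAt

lemma hasGradientAt_mul (hφ : HasGradientAt φ a x) (hψ : HasGradientAt ψ b x) :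
    HasGradientAt (fun y ↦ φ y * ψ y) (φ x • b + ψ x • a) x := by
  rw [hasGradientAt_iff_hasFDerivAt, map_add, map_smul, map_smul]
  exact hφ.hasFDerivAt.mul hψ.hasFDerivAt

lemma hasGradientAt_const_mul (c : ℝ) (hφ : HasGradientAt φ a x) :
    HasGradientAt (fun y ↦ c * φ y) (c • a) x := by
  simpa using hasGradientAt_mul (hasGradientAt_const x c) hφ

lemma hasGradientAt_inner_sub (e p x : E) : HasGradientAt (fun y ↦ ⟪e, y - p⟫) e x :=
  hasGradientAt_iff_hasFDerivAt.2
    ((innerSL ℝ e).hasFDerivAt.comp x ((hasFDerivAt_id x).sub_const p))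

lemma hasDerivAt_comp_curve {γ : ℝ → E} {v : E} {t : ℝ} (hψ : HasGradientAt ψ a (γ t))
    (hγ : HasDerivAt γ v t) : HasDerivAt (fun s ↦ ψ (γ s)) ⟪a, v⟫ t :=
  hψ.hasFDerivAt.comp_hasDerivAt t hγ

lemma hasGradientAt_comp {g : ℝ → ℝ} {g' : ℝ} (hg : HasDerivAt g g' (ψ x))
    (hψ : HasGradientAt ψ a x) : HasGradientAt (fun y ↦ g (ψ y)) (g' • a) x := by
  rw [hasGradientAt_iff_hasFDerivAt, map_smul]
  exact hg.comp_hasFDerivAt x hψ.hasFDerivAt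

lemma norm_gradient_sub (φ ψ : E → ℝ) (x : E) :
    ‖gradient ψ x - gradient φ x‖ = ‖fderiv ℝ ψ x - fderiv ℝ φ x‖ := by
  rw [gradient, gradient, ← map_sub, LinearIsometryEquiv.norm_map]

lemma exists_norm_gradient_sub_le_of_eventuallyEq_cocompact (hφ : ContDiff ℝ 1 φ)
    (hψ : ContDiff ℝ 1 ψ) (h : ψ =ᶠ[cocompact E] φ) :
    ∃ C, ∀ x, ‖gradient ψ x - gradient φ x‖ ≤ C := by
  have hsupp : HasCompactSupport (ψ - φ) := by
    rw [hasCompactSupport_iff_eventuallyEq, coclosedCompact_eq_cocompact]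
    filter_upwards [h] with x hx
    simp [hx]
  obtain ⟨C, hC⟩ := (hsupp.fderiv ℝ).exists_bound_of_continuous
    ((hψ.sub hφ).continuous_fderiv one_ne_zero)
  refine ⟨C, fun x ↦ ?_⟩
  rw [norm_gradient_sub, ← fderiv_sub (hψ.differentiable one_ne_zero x)
    (hφ.differentiable one_ne_zero x)]
  exact hC x

end GradientCalculus

section Homotopy

lemma norm_le_norm_lineMap_add {V : Type*} [NormedAddCommGroup V] [NormedSpace ℝ V] {t : ℝ}
    (ht : t ∈ Icc (0 : ℝ) 1) (a b : V) : ‖a‖ ≤ ‖AffineMap.lineMap a b t‖ + ‖b - a‖ :=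
  calc ‖a‖ = ‖AffineMap.lineMap a b t - t • (b - a)‖ := by simp [AffineMap.lineMap_apply]
    _ ≤ ‖AffineMap.lineMap a b t‖ + ‖t • (b - a)‖ := norm_sub_le _ _
    _ ≤ ‖AffineMap.lineMap a b t‖ + ‖b - a‖ := by
      rw [norm_smul, Real.norm_of_nonneg ht.1]
      gcongr
      exact mul_le_of_le_one_left (norm_nonneg _) ht.2

variable {n : ℕ} {C : ℝ}

lemma isProper_of_norm_sub_le {f g : Euc n → Euc n} (hf : IsProper f) (hg : Continuous g)
    (hfg : ∀ x, ‖g x - f x‖ ≤ C) : IsProper g := by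
  intro K hK
  obtain ⟨M, hM⟩ := hK.isBounded.exists_norm_le
  refine (hf _ (isCompact_closedBall 0 (M + C))).of_isClosed_subset (hK.isClosed.preimage hg) ?_
  intro x hx
  rw [mem_preimage, mem_closedBall_zero_iff]
  calc ‖f x‖ ≤ ‖g x‖ + ‖g x - f x‖ := norm_le_norm_add_norm_sub (g x) (f x)
    _ ≤ M + C := add_le_add (hM _ hx) (hfg x)

lemma properGradientHomotopic_of_norm_gradient_sub_le {φ ψ : Euc n → ℝ} (hφ : ContDiff ℝ 1 φ)
    (hψ : ContDiff ℝ 1 ψ) (hprop : IsProper (gradient φ))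
    (hC : ∀ x, ‖gradient ψ x - gradient φ x‖ ≤ C) :
    ProperGradientHomotopic (gradient φ) (gradient ψ) := by
  have hcont : Continuous fun p : ℝ × Euc n ↦
      AffineMap.lineMap (gradient φ p.2) (gradient ψ p.2) p.1 := by
    have := continuous_gradient hφ
    have := continuous_gradient hψ
    simp only [AffineMap.lineMap_apply]
    fun_prop
  refine ⟨fun t x ↦ AffineMap.lineMap (gradient φ x) (gradient ψ x) t,
    ⟨hcont.continuousOn, fun t _ ↦ ?_, fun K hK ↦ ?_⟩, by simp, by simp⟩
  · refine ⟨fun x ↦ (1 - t) * φ x + t * ψ x, by fun_prop, fun x ↦ ?_⟩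
    simp only [AffineMap.lineMap_apply_module]
    exact (hasGradientAt_add (hasGradientAt_const_mul (1 - t) (hasGradientAt_of_contDiff hφ x))
      (hasGradientAt_const_mul t (hasGradientAt_of_contDiff hψ x))).gradient
  · obtain ⟨M, hM⟩ := hK.isBounded.exists_norm_le
    refine ((isCompact_Icc (a := (0 : ℝ)) (b := 1)).prod
      (hprop _ (isCompact_closedBall 0 (M + C)))).of_isClosed_subset
      ((isClosed_Icc.preimage continuous_fst).inter (hK.isClosed.preimage hcont)) ?_
    rintro ⟨t, x⟩ ⟨ht, hx⟩
    refine ⟨ht, ?_⟩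
    rw [mem_preimage, mem_closedBall_zero_iff]
    exact (norm_le_norm_lineMap_add ht _ _).trans (add_le_add (hM _ hx) (hC x))

end Homotopy

section Smoothing

open MeasureTheory
open scoped ContDiff Convolution

variable {E F : Type*} [NormedAddCommGroup E] [NormedSpace ℝ E] [FiniteDimensional ℝ E]
  [NormedAddCommGroup F] [NormedSpace ℝ F] {u φ : E → F} {δ ε : ℝ}

lemma exists_contDiff_hasCompactSupport_eqOn_ball {k : ℕ∞} (hφ : ContDiff ℝ k φ) {R : ℝ}
    (hR : 0 < R) :
    ∃ w : E → F, ContDiff ℝ k w ∧ HasCompactSupport w ∧ EqOn w φ (ball 0 R) := by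
  let χ : ContDiffBump (0 : E) := ⟨R, R + 1, hR, lt_add_one R⟩
  refine ⟨fun x ↦ χ x • φ x, χ.contDiff.smul hφ, χ.hasCompactSupport.smul_right, fun x hx ↦ ?_⟩
  simp [χ.one_of_mem_closedBall (ball_subset_closedBall hx)]

lemma exists_hasCompactSupport_eqOn_sum_range {k : ℕ∞} (hφ : ContDiff ℝ k φ) :
    ∃ u : ℕ → E → F, (∀ n, ContDiff ℝ k (u n)) ∧ (∀ n, HasCompactSupport (u n)) ∧
      (∀ n, EqOn (u n) 0 (ball 0 n)) ∧ ∀ n, EqOn φ (∑ i ∈ Finset.range n, u i) (ball 0 n) := by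
  have hcut (n : ℕ) : ∃ w : E → F, ContDiff ℝ k w ∧ HasCompactSupport w ∧
      EqOn w φ (ball 0 n) ∧ (n = 0 → w = 0) := by
    cases n with
    | zero => exact ⟨0, contDiff_zero_fun, HasCompactSupport.zero, by simp, fun _ ↦ rfl⟩
    | succ n =>
      obtain ⟨w, hw, hsupp, heq⟩ :=
        exists_contDiff_hasCompactSupport_eqOn_ball hφ (R := (n + 1 : ℕ)) (by positivity)
      exact ⟨w, hw, hsupp, heq, by simp⟩
  choose w hw hsupp heq hzero using hcut
  refine ⟨fun n ↦ w (n + 1) - w n, fun n ↦ (hw _).sub (hw _),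
    fun n ↦ (hsupp _).sub (hsupp _), fun n x hx ↦ ?_, fun n x hx ↦ ?_⟩
  · have hx' : x ∈ ball (0 : E) (n + 1 : ℕ) := ball_subset_ball (by simp) hx
    simp [heq n hx, heq (n + 1) hx']
  · rw [Finset.sum_range_sub, hzero 0 rfl, sub_zero, heq n hx]

variable [CompleteSpace F]

lemma exists_contDiff_norm_fderiv_sub_le_of_hasCompactSupport (hu : ContDiff ℝ 1 u)
    (hsupp : HasCompactSupport u) (hδ : 0 < δ) :
    ∃ g : E → F, ContDiff ℝ ∞ g ∧ (∀ x, ‖fderiv ℝ g x - fderiv ℝ u x‖ ≤ δ) ∧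
      ∀ x, (∀ y ∈ ball x δ, u y = 0) → g x = 0 := by
  borelize E F
  let μ : Measure E := Measure.addHaar
  have hu' : Continuous (fderiv ℝ u) := hu.continuous_fderiv one_ne_zero
  obtain ⟨η, hη, hclose⟩ := Metric.uniformContinuous_iff.1
    ((hsupp.fderiv ℝ).uniformContinuous_of_continuous hu') δ hδ
  let ρ : ContDiffBump (0 : E) :=
    ⟨min η δ / 2, min η δ, half_pos (lt_min hη hδ), half_lt_self (lt_min hη hδ)⟩
  let g : E → F := ρ.normed μ ⋆[ContinuousLinearMap.lsmul ℝ ℝ, μ] u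
  have hderiv (x : E) : fderiv ℝ g x =
      (ρ.normed μ ⋆[ContinuousLinearMap.lsmul ℝ ℝ, μ] fderiv ℝ u) x :=
    (hsupp.hasFDerivAt_convolution_right _ ρ.continuous_normed.locallyIntegrable hu x).fderiv
  refine ⟨g, ρ.hasCompactSupport_normed.contDiff_convolution_left _ ρ.contDiff_normed
    hu.continuous.locallyIntegrable, fun x ↦ ?_, fun x hx ↦ ?_⟩
  · rw [hderiv, ← dist_eq_norm]
    exact ρ.dist_normed_convolution_le hu'.aestronglyMeasurable fun y hy ↦
      (hclose (hy.trans_le (min_le_left _ _))).le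
  · rw [← dist_le_zero, ← hx x (mem_ball_self hδ)]
    refine ρ.dist_normed_convolution_le hu.continuous.aestronglyMeasurable fun y hy ↦ ?_
    rw [hx x (mem_ball_self hδ), hx y (ball_subset_ball (min_le_right _ _) hy), dist_self]

lemma exists_contDiff_norm_fderiv_sub_le (hφ : ContDiff ℝ 1 φ) (hε : 0 < ε) :
    ∃ ψ : E → F, ContDiff ℝ ∞ ψ ∧ ∀ x, ‖fderiv ℝ ψ x - fderiv ℝ φ x‖ ≤ ε := by
  obtain ⟨u, hu, hsupp, hzero, hsum⟩ := exists_hasCompactSupport_eqOn_sum_range (k := 1) hφ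
  have hδ (n : ℕ) : 0 < min 1 (ε / 2 / 2 ^ n) := by positivity
  choose g hg hgu hg0 using fun n ↦
    exists_contDiff_norm_fderiv_sub_le_of_hasCompactSupport (hu n) (hsupp n) (hδ n)
  have hvanish {N n : ℕ} (hn : N + 1 ≤ n) {x : E} (hx : x ∈ ball 0 (N : ℝ)) : g n x = 0 := by
    refine hg0 n x fun y hy ↦ hzero n (mem_ball_zero_iff.2 ?_)
    have hyx : ‖y - x‖ < 1 := (mem_ball_iff_norm.1 hy).trans_le (min_le_left _ _)
    have hNn : (N : ℝ) + 1 ≤ n := mod_cast hn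
    linarith [norm_le_norm_add_norm_sub x y, norm_sub_rev x y, mem_ball_zero_iff.1 hx]
  let ψ : E → F := fun x ↦ ∑' n, g n x
  have hψ (N : ℕ) : EqOn ψ (∑ n ∈ Finset.range (N + 1), g n) (ball 0 N) := fun x hx ↦ by
    rw [Finset.sum_apply]
    exact tsum_eq_sum fun n hn ↦ hvanish (by simpa using hn) hx
  have hnhds (x : E) : ∃ N : ℕ, ball (0 : E) N ∈ nhds x := by
    obtain ⟨N, hN⟩ := exists_nat_gt ‖x‖
    exact ⟨N, isOpen_ball.mem_nhds (mem_ball_zero_iff.2 hN)⟩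
  refine ⟨ψ, contDiff_iff_contDiffAt.2 fun x ↦ ?_, fun x ↦ ?_⟩
  · obtain ⟨N, hN⟩ := hnhds x
    have hsmooth : ContDiff ℝ ∞ (∑ n ∈ Finset.range (N + 1), g n) := by
      simpa only [Finset.sum_fn] using ContDiff.sum fun n _ ↦ hg n
    exact hsmooth.contDiffAt.congr_of_eventuallyEq ((hψ N).eventuallyEq_of_mem hN)
  · obtain ⟨N, hN⟩ := hnhds x
    have hsub : ball (0 : E) N ⊆ ball 0 (N + 1 : ℕ) := ball_subset_ball (by simp)
    rw [((hψ N).eventuallyEq_of_mem hN).fderiv_eq,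
      (((hsum (N + 1)).mono hsub).eventuallyEq_of_mem hN).fderiv_eq,
      fderiv_sum fun n _ ↦ (hg n).differentiable (by simp) x,
      fderiv_sum fun n _ ↦ (hu n).differentiable one_ne_zero x, ← Finset.sum_sub_distrib]
    calc ‖∑ n ∈ Finset.range (N + 1), (fderiv ℝ (g n) x - fderiv ℝ (u n) x)‖
        ≤ ∑ n ∈ Finset.range (N + 1), ε / 2 / 2 ^ n :=
          norm_sum_le_of_le _ fun n _ ↦ (hgu n x).trans (min_le_right _ _)
      _ ≤ ∑' n : ℕ, ε / 2 / 2 ^ n :=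
          (summable_geometric_two' ε).sum_le_tsum _ fun n _ ↦ by positivity
      _ = ε := tsum_geometric_two' ε

end Smoothing

section RegularValues

open MeasureTheory

variable {E : Type*} [NormedAddCommGroup E] [NormedSpace ℝ E] [FiniteDimensional ℝ E] {F : E → E}

lemma bijective_of_det_ne_zero {T : E →L[ℝ] E} (hT : T.det ≠ 0) : Function.Bijective T :=
  (Module.End.isUnit_iff T.toLinearMap).1
    ((LinearMap.isUnit_iff_isUnit_det _).2 (isUnit_iff_ne_zero.2 hT))

lemma exists_norm_lt_forall_eq_imp_bijective_fderiv (hF : Differentiable ℝ F) {δ : ℝ}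
    (hδ : 0 < δ) : ∃ a, ‖a‖ < δ ∧ ∀ p, F p = a → Function.Bijective (fderiv ℝ F p) := by
  borelize E
  let μ : Measure E := Measure.addHaar
  have hnull : μ (F '' {p | (fderiv ℝ F p).det = 0}) = 0 :=
    addHaar_image_eq_zero_of_det_fderivWithin_eq_zero μ
      (fun x _ ↦ (hF x).hasFDerivAt.hasFDerivWithinAt) fun x hx ↦ hx
  obtain ⟨a, ha, hreg⟩ : (ball (0 : E) δ \ F '' {p | (fderiv ℝ F p).det = 0}).Nonempty := by
    rw [sdiff_nonempty]
    exact fun hsub ↦ (measure_ball_pos μ 0 hδ).ne' (measure_mono_null hsub hnull)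
  exact ⟨a, mem_ball_zero_iff.1 ha, fun p hp ↦
    bijective_of_det_ne_zero fun hdet ↦ hreg ⟨p, hdet, hp⟩⟩

lemma finite_setOf_eq_of_injective_fderiv (hF : Differentiable ℝ F) {c : E}
    (hc : IsCompact {x | F x = c}) (hinj : ∀ p, F p = c → Function.Injective (fderiv ℝ F p)) :
    {x | F x = c}.Finite := by
  by_contra hinf
  obtain ⟨p, hp, hacc⟩ := Set.Infinite.exists_accPt_of_subset_isCompact hinf hc Subset.rfl
  obtain ⟨K, -, hK⟩ := (fderiv ℝ F p).toLinearMap.exists_antilipschitzWith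
    (LinearMap.ker_eq_bot.2 (hinj p hp))
  have hisolated : ∀ᶠ x in nhdsWithin p {p}ᶜ, F x ≠ c :=
    (hF p).hasFDerivAt.eventually_ne ⟨K, hK⟩
  exact accPt_iff_frequently_nhdsNE.1 hacc (hisolated.mono fun x hx hxc ↦ hx hxc)

end RegularValues

section Morse

variable {E : Type*} [NormedAddCommGroup E] [InnerProductSpace ℝ E] [FiniteDimensional ℝ E]
  {φ ψ B : E → ℝ} {Z : Finset E} {p : E}

/-- `ψ` is a `C²` Morse function whose critical points are exactly the points of the finite
set `Z`. -/
structure IsMorseWith (ψ : E → ℝ) (Z : Finset E) : Prop where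
  contDiff : ContDiff ℝ 2 ψ
  gradient_eq_zero_iff : ∀ x, gradient ψ x = 0 ↔ x ∈ Z
  bijective_hessian : ∀ p ∈ Z, Function.Bijective (fderiv ℝ (gradient ψ) p)

lemma IsMorseWith.contDiff_one (h : IsMorseWith ψ Z) : ContDiff ℝ 1 ψ :=
  h.contDiff.of_le one_le_two

lemma IsMorseWith.gradient_eq_zero (h : IsMorseWith ψ Z) (hp : p ∈ Z) : gradient ψ p = 0 :=
  (h.gradient_eq_zero_iff p).2 hp

lemma exists_contDiff_bijective_hessian_norm_gradient_sub_le (hφ : ContDiff ℝ 1 φ) :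
    ∃ ψ : E → ℝ, ContDiff ℝ 2 ψ ∧
      (∀ p, gradient ψ p = 0 → Function.Bijective (fderiv ℝ (gradient ψ) p)) ∧
      ∀ x, ‖gradient ψ x - gradient φ x‖ ≤ 2 := by
  obtain ⟨χ, hχ, hχφ⟩ := exists_contDiff_norm_fderiv_sub_le hφ one_pos
  have hχ2 : ContDiff ℝ 2 χ := contDiff_infty.1 hχ 2
  obtain ⟨a, ha, hreg⟩ := exists_norm_lt_forall_eq_imp_bijective_fderiv
    ((contDiff_gradient (m := 1) hχ2 one_add_one_eq_two.le).differentiable one_ne_zero) one_pos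
  have hgrad (x : E) : gradient (fun x ↦ χ x + ⟪-a, x - 0⟫) x = gradient χ x - a :=
    (hasGradientAt_add (hasGradientAt_of_contDiff (hχ2.of_le one_le_two) x)
      (hasGradientAt_inner_sub (-a) 0 x)).gradient.trans (sub_eq_add_neg _ _).symm
  refine ⟨fun x ↦ χ x + ⟪-a, x - 0⟫,
    hχ2.add (contDiff_const.inner ℝ (contDiff_id.sub contDiff_const)), fun p hp ↦ ?_, fun x ↦ ?_⟩
  · rw [hgrad, sub_eq_zero] at hp
    rw [funext hgrad, fderiv_sub_const]
    exact hreg p hp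
  · calc ‖gradient (fun x ↦ χ x + ⟪-a, x - 0⟫) x - gradient φ x‖
        = ‖(gradient χ x - gradient φ x) - a‖ := by rw [hgrad, sub_right_comm]
      _ ≤ ‖gradient χ x - gradient φ x‖ + ‖a‖ := norm_sub_le _ _
      _ ≤ 1 + 1 := add_le_add ((norm_gradient_sub φ χ x).trans_le (hχφ x)) ha.le
      _ = 2 := one_add_one_eq_two

lemma exists_isMorseWith_of_isProper {n : ℕ} {ψ : Euc n → ℝ} (hψ : ContDiff ℝ 2 ψ)
    (hprop : IsProper (gradient ψ))
    (hbij : ∀ p, gradient ψ p = 0 → Function.Bijective (fderiv ℝ (gradient ψ) p)) :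
    ∃ Z, IsMorseWith ψ Z := by
  have hfin : {x | gradient ψ x = 0}.Finite := finite_setOf_eq_of_injective_fderiv
    ((contDiff_gradient (m := 1) hψ one_add_one_eq_two.le).differentiable one_ne_zero)
    (hprop {0} isCompact_singleton) fun p hp ↦ (hbij p hp).1
  exact ⟨hfin.toFinset, hψ, by simp, by simpa using hbij⟩

lemma hasCompactSupport_gradient (hB : HasCompactSupport B) : HasCompactSupport (gradient B) :=
  (hB.fderiv ℝ).comp_left (map_zero (InnerProductSpace.toDual ℝ E).symm)

lemma eventually_gradient_add_const_mul_eq_zero_iff (hψ : ContDiff ℝ 1 ψ) (hB : ContDiff ℝ 1 B)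
    (hsupp : HasCompactSupport B) (hB0 : ∀ x, gradient ψ x = 0 → gradient B =ᶠ[nhds x] 0) :
    ∀ᶠ ε : ℝ in nhds 0, ∀ x, gradient (fun y ↦ ψ y + ε * B y) x = 0 ↔ gradient ψ x = 0 := by
  have hcψ : Continuous (gradient ψ) := continuous_gradient hψ
  have hcB : Continuous (gradient B) := continuous_gradient hB
  have hne : ∀ᶠ ε : ℝ in nhds 0, ∀ x ∈ tsupport (gradient B),
      gradient ψ x + ε • gradient B x ≠ 0 := by
    refine (hasCompactSupport_gradient hsupp).isCompact.eventually_forall_of_forall_eventually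
      fun x hx ↦ ?_
    have hcont : Continuous fun q : ℝ × E ↦ gradient ψ q.2 + q.1 • gradient B q.2 := by fun_prop
    refine hcont.continuousAt.eventually_ne ?_
    simpa using fun hx0 ↦ notMem_tsupport_iff_eventuallyEq.2 (hB0 x hx0) hx
  filter_upwards [hne] with ε hε x
  rw [(hasGradientAt_add (hasGradientAt_of_contDiff hψ x)
    (hasGradientAt_const_mul ε (hasGradientAt_of_contDiff hB x))).gradient]
  by_cases hx : x ∈ tsupport (gradient B)
  · refine iff_of_false (hε x hx) fun hx0 ↦ notMem_tsupport_iff_eventuallyEq.2 (hB0 x hx0) hx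
  · rw [image_eq_zero_of_notMem_tsupport hx, smul_zero, add_zero]

lemma IsMorseWith.eventually_add_const_mul (h : IsMorseWith ψ Z) (hB : ContDiff ℝ 2 B)
    (hsupp : HasCompactSupport B) (hB0 : ∀ p ∈ Z, gradient B =ᶠ[nhds p] 0) :
    ∀ᶠ ε : ℝ in nhds 0, IsMorseWith (fun x ↦ ψ x + ε * B x) Z := by
  have hB1 : ContDiff ℝ 1 B := hB.of_le one_le_two
  filter_upwards [eventually_gradient_add_const_mul_eq_zero_iff h.contDiff_one hB1 hsupp
    fun x hx ↦ hB0 x ((h.gradient_eq_zero_iff x).1 hx)] with ε hε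
  refine ⟨h.contDiff.add (contDiff_const.mul hB),
    fun x ↦ (hε x).trans (h.gradient_eq_zero_iff x), fun p hp ↦ ?_⟩
  have heq : gradient (fun x ↦ ψ x + ε * B x) =ᶠ[nhds p] gradient ψ := by
    filter_upwards [hB0 p hp] with x hx
    rw [(hasGradientAt_add (hasGradientAt_of_contDiff h.contDiff_one x)
      (hasGradientAt_const_mul ε (hasGradientAt_of_contDiff hB1 x))).gradient, hx]
    simp
  rw [heq.fderiv_eq]
  exact h.bijective_hessian p hp

end Morse

section QuadraticAt

open Asymptotics
open scoped Topology

variable {E : Type*} [NormedAddCommGroup E] [InnerProductSpace ℝ E]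

lemma contDiff_quadratic (H : E →L[ℝ] E) (p : E) {n : WithTop ℕ∞} :
    ContDiff ℝ n fun x ↦ ⟪H (x - p), x - p⟫ / 2 := by
  have hsub : ContDiff ℝ n fun x : E ↦ x - p := contDiff_id.sub contDiff_const
  exact ((H.contDiff.comp hsub).inner ℝ hsub).div_const 2

variable [CompleteSpace E] {φ ψ : E → ℝ} {p : E}

/-- `ψ` coincides near `p` with its second order Taylor polynomial at a critical point `p`. -/
def IsQuadraticAt (ψ : E → ℝ) (p : E) : Prop :=
  ψ =ᶠ[𝓝 p] fun x ↦ ψ p + ⟪fderiv ℝ (gradient ψ) p (x - p), x - p⟫ / 2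

lemma IsQuadraticAt.congr (h : IsQuadraticAt ψ p) (hφ : φ =ᶠ[𝓝 p] ψ) : IsQuadraticAt φ p := by
  rw [IsQuadraticAt, hφ.gradient.fderiv_eq, hφ.eq_of_nhds]
  exact hφ.trans h

lemma IsQuadraticAt.add_const (h : IsQuadraticAt ψ p) (c : ℝ) :
    IsQuadraticAt (fun x ↦ ψ x + c) p := by
  have hgrad : gradient (fun x ↦ ψ x + c) = gradient ψ := by
    ext1 x
    rw [gradient, gradient, fderiv_add_const]
  filter_upwards [h] with x hx
  rw [hx, hgrad]
  ring

lemma isSymmetric_hessian (hψ : ContDiff ℝ 2 ψ) (p : E) :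
    (fderiv ℝ (gradient ψ) p : E →ₗ[ℝ] E).IsSymmetric := by
  have hgrad : DifferentiableAt ℝ (gradient ψ) p :=
    (contDiff_gradient (m := 1) hψ one_add_one_eq_two.le).differentiable one_ne_zero p
  have hfderiv : DifferentiableAt ℝ (fderiv ℝ ψ) p :=
    (hψ.fderiv_right (m := 1) one_add_one_eq_two.le).differentiable one_ne_zero p
  have hsecond (v w : E) : ⟪fderiv ℝ (gradient ψ) p v, w⟫ = fderiv ℝ (fderiv ℝ ψ) p v w := by
    have hinner : HasFDerivAt (fun x ↦ fderiv ℝ ψ x w) _ p :=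
      (hgrad.hasFDerivAt.inner ℝ (hasFDerivAt_const w p)).congr_of_eventuallyEq
        (.of_forall fun x ↦ inner_gradient_left.symm)
    simpa using DFunLike.congr_fun
      (hinner.unique (hfderiv.hasFDerivAt.clm_apply (hasFDerivAt_const w p))) v
  intro v w
  have hsymm : IsSymmSndFDerivAt ℝ ψ p := hψ.contDiffAt.isSymmSndFDerivAt (by simp)
  rw [ContinuousLinearMap.coe_coe, real_inner_comm _ v, hsecond, hsecond, hsymm v w]

lemma hasGradientAt_quadratic {H : E →L[ℝ] E} (hH : (H : E →ₗ[ℝ] E).IsSymmetric) (p x : E) :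
    HasGradientAt (fun y ↦ ⟪H (y - p), y - p⟫ / 2) (H (x - p)) x := by
  have hsub : HasFDerivAt (fun y : E ↦ y - p) (ContinuousLinearMap.id ℝ E) x :=
    (hasFDerivAt_id x).sub_const p
  have hmul := ((H.hasFDerivAt.comp x hsub).inner ℝ hsub).mul_const (2⁻¹ : ℝ)
  simp only [← div_eq_mul_inv] at hmul
  refine hasGradientAt_iff_hasFDerivAt.2 (hmul.congr_fderiv ?_)
  ext v
  have hsymm : ⟪H v, x - p⟫ = ⟪H (x - p), v⟫ := by
    rw [real_inner_comm]
    exact (hH (x - p) v).symm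
  simp only [Function.comp_apply, smul_apply, ContinuousLinearMap.comp_apply,
    ContinuousLinearMap.prod_apply, ContinuousLinearMap.id_apply, fderivInnerCLM_apply, hsymm,
    InnerProductSpace.toDual_apply_apply, smul_eq_mul]
  ring

lemma gradient_eventuallyEq_of_eventuallyEq_quadratic {H : E →L[ℝ] E}
    (hH : (H : E →ₗ[ℝ] E).IsSymmetric) {c : ℝ}
    (h : ψ =ᶠ[𝓝 p] fun x ↦ c + ⟪H (x - p), x - p⟫ / 2) :
    gradient ψ =ᶠ[𝓝 p] fun x ↦ H (x - p) := by
  filter_upwards [h.gradient] with x hx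
  rw [hx, (hasGradientAt_add (hasGradientAt_const x c) (hasGradientAt_quadratic hH p x)).gradient,
    zero_add]

lemma isQuadraticAt_of_eventuallyEq_quadratic {H : E →L[ℝ] E}
    (hH : (H : E →ₗ[ℝ] E).IsSymmetric) {c : ℝ}
    (h : ψ =ᶠ[𝓝 p] fun x ↦ c + ⟪H (x - p), x - p⟫ / 2) :
    fderiv ℝ (gradient ψ) p = H ∧ IsQuadraticAt ψ p := by
  have hhess : fderiv ℝ (gradient ψ) p = H := by
    rw [(gradient_eventuallyEq_of_eventuallyEq_quadratic hH h).fderiv_eq]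
    exact (H.hasFDerivAt.comp p ((hasFDerivAt_id p).sub_const p)).fderiv
  have hc : ψ p = c := by simpa using h.eq_of_nhds
  refine ⟨hhess, ?_⟩
  rwa [IsQuadraticAt, hhess, hc]

end QuadraticAt

section Cutoff

open Asymptotics
open scoped Topology

variable {E : Type*} [NormedAddCommGroup E] [InnerProductSpace ℝ E] [FiniteDimensional ℝ E]
  {w : E → ℝ} {p : E} {η ρ : ℝ}

lemma abs_le_mul_sq_of_norm_gradient_le (hw : ContDiff ℝ 1 w) (hwp : w p = 0)
    (hη : 0 ≤ η) (hgrad : ∀ x ∈ ball p ρ, ‖gradient w x‖ ≤ η * ‖x - p‖) {x : E}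
    (hx : x ∈ ball p ρ) : |w x| ≤ η * ‖x - p‖ ^ 2 := by
  have hball : closedBall p ‖x - p‖ ⊆ ball p ρ := closedBall_subset_ball (mem_ball_iff_norm.1 hx)
  have hmean := (convex_closedBall p ‖x - p‖).norm_image_sub_le_of_norm_fderiv_le
    (fun y _ ↦ hw.differentiable one_ne_zero y) (C := η * ‖x - p‖) (fun y hy ↦ ?_)
    (mem_closedBall_self (norm_nonneg _)) (mem_closedBall_iff_norm.2 le_rfl)
  · rwa [hwp, sub_zero, Real.norm_eq_abs, mul_assoc, ← sq] at hmean
  · rw [← (InnerProductSpace.toDual ℝ E).symm.norm_map]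
    exact (hgrad y (hball hy)).trans (mul_le_mul_of_nonneg_left (mem_closedBall_iff_norm.1 hy) hη)

lemma exists_bump_norm_gradient_le (p : E) : ∃ C : ℝ, ∀ r > 0, ∃ B : E → ℝ, ContDiff ℝ 2 B ∧
    (∀ x, B x ∈ Icc 0 1) ∧ EqOn B 1 (ball p r) ∧ EqOn B 0 (ball p (2 * r))ᶜ ∧
    ∀ x, ‖gradient B x‖ ≤ C / r := by
  let χ : ContDiffBump (0 : E) := ⟨1, 2, one_pos, one_lt_two⟩
  obtain ⟨C, hC⟩ := (χ.hasCompactSupport.fderiv ℝ).exists_bound_of_continuous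
    (χ.contDiff.continuous_fderiv (n := 1) one_ne_zero)
  refine ⟨C, fun r hr ↦ ⟨fun x ↦ χ (r⁻¹ • (x - p)), χ.contDiff.comp (by fun_prop),
    fun x ↦ ⟨χ.nonneg, χ.le_one⟩, fun x hx ↦ χ.one_of_mem_closedBall ?_,
    fun x hx ↦ χ.zero_of_le_dist ?_, fun x ↦ ?_⟩⟩
  · rw [mem_closedBall_zero_iff, norm_smul, norm_inv, Real.norm_of_nonneg hr.le, inv_mul_le_one₀ hr]
    exact (mem_ball_iff_norm.1 hx).le
  · rw [dist_zero_right, norm_smul, norm_inv, Real.norm_of_nonneg hr.le, le_inv_mul_iff₀ hr,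
      mul_comm]
    simpa [dist_eq_norm] using hx
  · have hscale : HasFDerivAt (fun y : E ↦ r⁻¹ • (y - p)) (r⁻¹ • ContinuousLinearMap.id ℝ E) x :=
      ((hasFDerivAt_id x).sub_const p).const_smul r⁻¹
    have hχ := (χ.contDiff.differentiable (n := 1) one_ne_zero (r⁻¹ • (x - p))).hasFDerivAt
    have hderiv : HasFDerivAt (fun y ↦ χ (r⁻¹ • (y - p))) _ x :=
      HasFDerivAt.comp (g := χ) x hχ hscale
    rw [gradient, LinearIsometryEquiv.norm_map, hderiv.fderiv, ContinuousLinearMap.comp_smul,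
      ContinuousLinearMap.comp_id, norm_smul, norm_inv, Real.norm_of_nonneg hr.le, inv_mul_eq_div]
    gcongr
    exact hC _

lemma norm_gradient_mul_le {B : E → ℝ} {x : E} {C r : ℝ} (hB : ContDiff ℝ 1 B)
    (hw : ContDiff ℝ 1 w) (hr : 0 < r) (hη : 0 ≤ η) (hx : ‖x - p‖ ≤ 2 * r)
    (hBx : B x ∈ Icc 0 1) (hBgrad : ‖gradient B x‖ ≤ C / r) (hwx : |w x| ≤ η * ‖x - p‖ ^ 2)
    (hwgrad : ‖gradient w x‖ ≤ η * ‖x - p‖) :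
    ‖gradient (fun y ↦ B y * w y) x‖ ≤ η * (1 + 2 * C) * ‖x - p‖ := by
  have : 0 ≤ C / r := (norm_nonneg _).trans hBgrad
  rw [(hasGradientAt_mul (hasGradientAt_of_contDiff hB x)
    (hasGradientAt_of_contDiff hw x)).gradient]
  calc ‖B x • gradient w x + w x • gradient B x‖
      ≤ |B x| * ‖gradient w x‖ + |w x| * ‖gradient B x‖ := by
        simpa only [norm_smul, Real.norm_eq_abs] using
          norm_add_le (B x • gradient w x) (w x • gradient B x)
    _ ≤ 1 * (η * ‖x - p‖) + (η * ‖x - p‖ * (2 * r)) * (C / r) := by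
      gcongr
      · exact abs_le.2 ⟨by linarith [hBx.1], hBx.2⟩
      · refine hwx.trans ?_
        rw [sq, ← mul_assoc]
        gcongr
    _ = η * (1 + 2 * C) * ‖x - p‖ := by
      field_simp

lemma exists_cutoff_norm_gradient_le (hw : ContDiff ℝ 2 w) (hwp : w p = 0)
    (hgrad : gradient w =o[𝓝 p] fun x ↦ x - p) (hη : 0 < η) (hρ : 0 < ρ) :
    ∃ u : E → ℝ, ContDiff ℝ 2 u ∧ u =ᶠ[𝓝 p] w ∧ tsupport u ⊆ ball p ρ ∧
      ∀ x, ‖gradient u x‖ ≤ η * ‖x - p‖ := by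
  obtain ⟨C, hbump⟩ := exists_bump_norm_gradient_le p
  have hC : 0 ≤ C := by
    obtain ⟨B, -, -, -, -, hB⟩ := hbump 1 one_pos
    simpa using (norm_nonneg _).trans (hB p)
  have hη' : 0 < η / (1 + 2 * C) := by positivity
  obtain ⟨R, hR, hwR⟩ := Metric.eventually_nhds_iff_ball.1 (hgrad.def hη')
  have hr : 0 < min R ρ / 3 := by positivity
  set r := min R ρ / 3 with hr_def
  have h2R : 2 * r < R := by linarith [min_le_left R ρ]
  have h2ρ : 2 * r < ρ := by linarith [min_le_right R ρ]
  obtain ⟨B, hB, hB01, hB1, hB0, hBgrad⟩ := hbump r hr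
  have hw1 : ContDiff ℝ 1 w := hw.of_le one_le_two
  have hB' : ContDiff ℝ 1 B := hB.of_le one_le_two
  refine ⟨fun x ↦ B x * w x, hB.mul hw, ?_, ?_, fun x ↦ ?_⟩
  · filter_upwards [ball_mem_nhds p hr] with x hx
    simp [hB1 hx]
  · refine (closure_minimal (fun x hx ↦ ?_) isClosed_closedBall).trans
      (closedBall_subset_ball h2ρ)
    by_contra hx'
    exact hx (by simp [hB0 fun hx'' ↦ hx' (ball_subset_closedBall hx'')])
  by_cases hx : x ∈ ball p (2 * r)
  · have hxR : x ∈ ball p R := ball_subset_ball h2R.le hx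
    refine (norm_gradient_mul_le hB' hw1 hr hη'.le (mem_ball_iff_norm.1 hx).le (hB01 x) (hBgrad x)
      (abs_le_mul_sq_of_norm_gradient_le hw1 hwp hη'.le hwR hxR) (hwR x hxR)).trans_eq ?_
    rw [div_mul_cancel₀ _ (by positivity)]
  · have hmin : IsLocalMin B x := .of_forall fun y ↦ (hB0 hx).trans_le (hB01 y).1
    have hzero : gradient B x = 0 := by rw [gradient, hmin.fderiv_eq_zero, map_zero]
    rw [(hasGradientAt_mul (hasGradientAt_of_contDiff hB' x)
      (hasGradientAt_of_contDiff hw1 x)).gradient, hzero, hB0 hx]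
    simpa using by positivity

end Cutoff

section MorseNormalForm

open Asymptotics
open scoped Topology

lemma exists_pos_forall_notMem_closedBall {X : Type*} [MetricSpace X] (Z : Finset X) (p : X) :
    ∃ ρ > 0, ∀ q ∈ Z, q ≠ p → q ∉ closedBall p ρ := by
  classical
  obtain ⟨ρ, hρ, hsub⟩ := nhds_basis_closedBall.mem_iff.1
    ((Z.erase p).finite_toSet.isClosed.isOpen_compl.mem_nhds (by simp : p ∈ (Z.erase p : Set X)ᶜ))
  exact ⟨ρ, hρ, fun q hq hqp hball ↦ hsub hball (Finset.mem_erase.2 ⟨hqp, hq⟩)⟩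

lemma eventuallyEq_of_eqOn_compl_closedBall {X Y : Type*} [PseudoMetricSpace X] {f g : X → Y}
    {p q : X} {ρ : ℝ} (h : EqOn f g (closedBall p ρ)ᶜ) (hq : q ∉ closedBall p ρ) : f =ᶠ[𝓝 q] g :=
  h.eventuallyEq_of_mem (isClosed_closedBall.isOpen_compl.mem_nhds hq)

variable {E : Type*} [NormedAddCommGroup E]

lemma eq_zero_iff_of_norm_sub_apply_le [NormedSpace ℝ E] {T : E →L[ℝ] E} {m : ℝ} {z g : E}
    (hm : 0 < m) (hT : m * ‖z‖ ≤ ‖T z‖) (hg : ‖g - T z‖ ≤ 2 * m / 3 * ‖z‖) : g = 0 ↔ z = 0 := by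
  refine ⟨fun h ↦ ?_, fun h ↦ by simpa [h] using hg⟩
  rw [h, zero_sub, norm_neg] at hg
  have hz : m * ‖z‖ ≤ 0 := by linarith
  exact norm_le_zero_iff.1 (nonpos_of_mul_nonpos_right hz hm)

variable [InnerProductSpace ℝ E] [FiniteDimensional ℝ E]
  {ψ : E → ℝ} {p : E} {ρ : ℝ} {Z : Finset E}

lemma exists_pos_forall_mul_norm_le_norm_apply {T : E →L[ℝ] E} (hT : Function.Injective T) :
    ∃ m > 0, ∀ z, m * ‖z‖ ≤ ‖T z‖ := by
  obtain ⟨K, hK, hanti⟩ := T.toLinearMap.exists_antilipschitzWith (LinearMap.ker_eq_bot.2 hT)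
  refine ⟨(K : ℝ)⁻¹, inv_pos.2 (NNReal.coe_pos.2 hK), fun z ↦ ?_⟩
  rw [inv_mul_le_iff₀ (NNReal.coe_pos.2 hK)]
  simpa using hanti.le_mul_dist z 0

lemma gradient_eventuallyEq_zero {c : ℝ} (h : ψ =ᶠ[𝓝 p] fun _ ↦ c) : gradient ψ =ᶠ[𝓝 p] 0 :=
  h.gradient.trans (gradient_fun_const' c).eventuallyEq

lemma IsMorseWith.of_eventuallyEq {φ : E → ℝ} (h : IsMorseWith ψ Z)
    (hφ : ContDiff ℝ 2 φ) (hzero : ∀ x, gradient φ x = 0 ↔ gradient ψ x = 0)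
    (hp : fderiv ℝ (gradient φ) p = fderiv ℝ (gradient ψ) p)
    (hne : ∀ q ∈ Z, q ≠ p → φ =ᶠ[𝓝 q] ψ) : IsMorseWith φ Z := by
  refine ⟨hφ, fun x ↦ (hzero x).trans (h.gradient_eq_zero_iff x), fun q hq ↦ ?_⟩
  rcases eq_or_ne q p with rfl | hqp
  · rw [hp]
    exact h.bijective_hessian q hq
  · rw [(hne q hq hqp).gradient.fderiv_eq]
    exact h.bijective_hessian q hq

lemma isLittleO_gradient_taylor_sub (hψ : ContDiff ℝ 2 ψ) (hp : gradient ψ p = 0) :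
    (fun x ↦ gradient ψ x - fderiv ℝ (gradient ψ) p (x - p)) =o[𝓝 p] fun x ↦ x - p := by
  have hderiv := ((contDiff_gradient (m := 1) hψ one_add_one_eq_two.le).differentiable
    one_ne_zero p).hasFDerivAt.isLittleO
  simpa only [hp, sub_zero] using hderiv

lemma gradient_taylor_sub (hψ : ContDiff ℝ 2 ψ) (p x : E) :
    gradient (fun y ↦ ψ p + ⟪fderiv ℝ (gradient ψ) p (y - p), y - p⟫ / 2 - ψ y) x =
      -(gradient ψ x - fderiv ℝ (gradient ψ) p (x - p)) := by
  have hquad := hasGradientAt_add (hasGradientAt_const x (ψ p))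
    (hasGradientAt_quadratic (isSymmetric_hessian hψ p) p x)
  have hneg := hasGradientAt_const_mul (-1) (hasGradientAt_of_contDiff (hψ.of_le one_le_two) x)
  have hsub := (hasGradientAt_add hquad hneg).gradient
  simp only [neg_one_mul, ← sub_eq_add_neg] at hsub
  rw [hsub, zero_add, neg_smul, one_smul, neg_sub]
  exact (sub_eq_add_neg _ _).symm

lemma IsMorseWith.exists_isQuadraticAt (h : IsMorseWith ψ Z) (hp : p ∈ Z) (hρ : 0 < ρ)
    (hsep : ∀ q ∈ Z, q ≠ p → q ∉ closedBall p ρ) :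
    ∃ φ, IsMorseWith φ Z ∧ EqOn φ ψ (closedBall p ρ)ᶜ ∧ IsQuadraticAt φ p := by
  set H := fderiv ℝ (gradient ψ) p with hH
  have hp0 : gradient ψ p = 0 := h.gradient_eq_zero hp
  have hsymm := isSymmetric_hessian h.contDiff p
  obtain ⟨m, hm, hlower⟩ := exists_pos_forall_mul_norm_le_norm_apply (h.bijective_hessian p hp).1
  have hη : 0 < m / 3 := by positivity
  have hlittle := isLittleO_gradient_taylor_sub h.contDiff hp0
  obtain ⟨R, hR, hclose⟩ := Metric.eventually_nhds_iff_ball.1 (hlittle.def hη)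
  obtain ⟨u, hu, hup, husupp, hugrad⟩ := exists_cutoff_norm_gradient_le
    (w := fun y ↦ ψ p + ⟪H (y - p), y - p⟫ / 2 - ψ y) (p := p)
    ((contDiff_const.add (contDiff_quadratic H p)).sub h.contDiff) (by simp)
    (by simpa only [hH, funext (gradient_taylor_sub h.contDiff p)] using hlittle.neg_left) hη
    (lt_min hR hρ)
  have hgrad (x : E) : gradient (fun y ↦ ψ y + u y) x = gradient ψ x + gradient u x :=
    (hasGradientAt_add (hasGradientAt_of_contDiff h.contDiff_one x)
      (hasGradientAt_of_contDiff (hu.of_le one_le_two) x)).gradient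
  have hquad : (fun y ↦ ψ y + u y) =ᶠ[𝓝 p] fun y ↦ ψ p + ⟪H (y - p), y - p⟫ / 2 :=
    hup.mono fun y hy ↦ by simp only [hy, add_sub_cancel]
  have hoff : EqOn (fun y ↦ ψ y + u y) ψ (closedBall p ρ)ᶜ := fun x hx ↦ by
    have hxu : x ∉ tsupport u := fun hxu ↦
      hx (ball_subset_closedBall (ball_subset_ball (min_le_right R ρ) (husupp hxu)))
    simp only [image_eq_zero_of_notMem_tsupport hxu, add_zero]
  obtain ⟨hhess, hquad'⟩ := isQuadraticAt_of_eventuallyEq_quadratic hsymm hquad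
  refine ⟨fun y ↦ ψ y + u y, h.of_eventuallyEq (h.contDiff.add hu) (fun x ↦ ?_)
    hhess fun q hq hqp ↦ eventuallyEq_of_eqOn_compl_closedBall hoff (hsep q hq hqp), hoff, hquad'⟩
  rw [hgrad]
  by_cases hx : x ∈ tsupport u
  · have hxR := hclose x (ball_subset_ball (min_le_left R ρ) (husupp hx))
    have hnorm : ‖gradient ψ x + gradient u x - H (x - p)‖ ≤ 2 * m / 3 * ‖x - p‖ := by
      rw [add_sub_right_comm]
      linarith [norm_add_le (gradient ψ x - H (x - p)) (gradient u x), hugrad x]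
    rw [eq_zero_iff_of_norm_sub_apply_le hm (hlower _) hnorm,
      eq_zero_iff_of_norm_sub_apply_le hm (hlower (x - p))
        (hxR.trans (by gcongr; linarith))]
  · rw [(notMem_tsupport_iff_eventuallyEq.1 hx).gradient_eq]
    simp [gradient]

lemma IsMorseWith.exists_isQuadraticAt_forall_ne (h : IsMorseWith ψ Z) (hρ : 0 < ρ)
    (hquad : IsQuadraticAt ψ p) (hsep : ∀ q ∈ Z, q ≠ p → q ∉ closedBall p ρ) :
    ∃ φ, IsMorseWith φ Z ∧ EqOn φ ψ (closedBall p ρ)ᶜ ∧ IsQuadraticAt φ p ∧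
      ∀ q ∈ Z, q ≠ p → φ q ≠ φ p := by
  let B : ContDiffBump p := ⟨ρ / 2, ρ, half_pos hρ, half_lt_self hρ⟩
  have hBp : B =ᶠ[𝓝 p] 1 := B.eventuallyEq_one
  have hBoff {x : E} (hx : x ∉ closedBall p ρ) : B x = 0 :=
    B.zero_of_le_dist (not_le.1 hx).le
  have hB0 : ∀ q ∈ Z, gradient B =ᶠ[𝓝 q] 0 := fun q hq ↦ by
    rcases eq_or_ne q p with rfl | hqp
    · exact gradient_eventuallyEq_zero hBp
    · exact gradient_eventuallyEq_zero
        (eventuallyEq_of_eqOn_compl_closedBall (fun _ ↦ hBoff) (hsep q hq hqp))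
  have hvalues : ∀ᶠ ε : ℝ in 𝓝[≠] 0, ∀ q ∈ Z, q ≠ p → ψ q ≠ ψ p + ε := by
    have hfinite := (Z.image fun q ↦ ψ q - ψ p).finite_toSet.compl_mem_cofinite
    filter_upwards [nhdsNE_le_cofinite 0 hfinite] with ε hε q hq _ heq
    exact hε (Finset.mem_coe.2 (Finset.mem_image.2 ⟨q, hq, sub_eq_of_eq_add' heq⟩))
  obtain ⟨ε, hmorse, hε⟩ := (((h.eventually_add_const_mul B.contDiff B.hasCompactSupport
    hB0).filter_mono nhdsWithin_le_nhds).and hvalues).exists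
  have hshift : (fun x ↦ ψ x + ε * B x) =ᶠ[𝓝 p] fun x ↦ ψ x + ε :=
    hBp.mono fun x hx ↦ by simp [hx]
  refine ⟨_, hmorse, fun x hx ↦ by simp [hBoff hx], (hquad.add_const ε).congr hshift,
    fun q hq hqp ↦ ?_⟩
  simpa [hBoff (hsep q hq hqp), hshift.eq_of_nhds] using hε q hq hqp

lemma IsMorseWith.exists_isQuadraticAt_and_forall_ne (h : IsMorseWith ψ Z) (hp : p ∈ Z) :
    ∃ φ, IsMorseWith φ Z ∧ φ =ᶠ[cocompact E] ψ ∧ IsQuadraticAt φ p ∧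
      ∀ q ∈ Z, q ≠ p → φ =ᶠ[𝓝 q] ψ ∧ φ q ≠ φ p := by
  obtain ⟨ρ, hρ, hsep⟩ := exists_pos_forall_notMem_closedBall Z p
  obtain ⟨χ, hχ, hχψ, hquad⟩ := h.exists_isQuadraticAt hp hρ hsep
  obtain ⟨φ, hφ, hφχ, hφquad, hvalues⟩ := hχ.exists_isQuadraticAt_forall_ne hρ hquad hsep
  have hφψ : EqOn φ ψ (closedBall p ρ)ᶜ := hφχ.trans hχψ
  exact ⟨φ, hφ, hφψ.eventuallyEq_of_mem (isCompact_closedBall p ρ).compl_mem_cocompact, hφquad,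
    fun q hq hqp ↦
      ⟨eventuallyEq_of_eqOn_compl_closedBall hφψ (hsep q hq hqp), hvalues q hq hqp⟩⟩

lemma IsMorseWith.exists_isQuadraticAt_injOn (h : IsMorseWith ψ Z) :
    ∃ φ, IsMorseWith φ Z ∧ φ =ᶠ[cocompact E] ψ ∧ (∀ p ∈ Z, IsQuadraticAt φ p) ∧ InjOn φ Z := by
  suffices ∀ S ⊆ Z, ∃ φ, IsMorseWith φ Z ∧ φ =ᶠ[cocompact E] ψ ∧
      (∀ p ∈ S, IsQuadraticAt φ p) ∧ InjOn φ S from this Z subset_rfl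
  intro S
  induction S using Finset.cons_induction with
  | empty => exact fun _ ↦ ⟨ψ, h, .rfl, by simp, by simp⟩
  | cons p S hpS ih =>
    intro hS
    obtain ⟨hpZ, hSZ⟩ := Finset.cons_subset.1 hS
    obtain ⟨χ, hχ, hχψ, hχquad, hχinj⟩ := ih hSZ
    obtain ⟨φ, hφ, hφχ, hφquad, hne⟩ := hχ.exists_isQuadraticAt_and_forall_ne hpZ
    have hcongr (q) (hq : q ∈ S) : φ =ᶠ[𝓝 q] χ ∧ φ q ≠ φ p :=
      hne q (hSZ hq) (ne_of_mem_of_not_mem hq hpS)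
    refine ⟨φ, hφ, hφχ.trans hχψ, ?_, ?_⟩
    · rw [Finset.forall_mem_cons]
      exact ⟨hφquad, fun q hq ↦ (hχquad q hq).congr (hcongr q hq).1⟩
    · rw [Finset.coe_cons, injOn_insert (mod_cast hpS)]
      refine ⟨hχinj.congr fun q hq ↦ (hcongr q hq).1.eq_of_nhds.symm, ?_⟩
      rintro ⟨q, hq, heq⟩
      exact (hcongr q hq).2 heq

end MorseNormalForm

section LinearODE

open scoped Topology

variable {V g : ℝ → ℝ} {b c M T t₀ t₁ : ℝ}

lemma hasDerivAt_mul_exp_const_mul {v' t : ℝ} (c : ℝ) (hV : HasDerivAt V v' t) :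
    HasDerivAt (fun s ↦ V s * Real.exp (c * s)) ((v' + c * V t) * Real.exp (c * t)) t :=
  (hV.mul ((hasDerivAt_id t).const_mul c).exp).congr_deriv (by simp only [id]; ring)

lemma eq_mul_exp_of_hasDerivAt {I : Set ℝ} (hI : Convex ℝ I)
    (hV : ∀ t ∈ I, HasDerivAt V (c * V t) t) {s t : ℝ} (hs : s ∈ I) (ht : t ∈ I) :
    V t = V s * Real.exp (c * (t - s)) := by
  have hderiv : ∀ x ∈ I, HasDerivWithinAt (fun y ↦ V y * Real.exp (-c * y)) 0 I x := fun x hx ↦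
    ((hasDerivAt_mul_exp_const_mul (-c) (hV x hx)).congr_deriv (by ring)).hasDerivWithinAt
  have hconst : V t * Real.exp (-c * t) = V s * Real.exp (-c * s) := by
    simpa [sub_eq_zero] using hI.norm_image_sub_le_of_norm_hasDerivWithin_le (C := 0) hderiv
      (by simp) hs ht
  calc V t = V t * Real.exp (-c * t) * Real.exp (c * t) := by
        rw [mul_assoc, ← Real.exp_add, neg_mul, neg_add_cancel, Real.exp_zero, mul_one]
    _ = V s * Real.exp (c * (t - s)) := by
      rw [hconst, mul_assoc, ← Real.exp_add]
      ring_nf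

lemma eq_zero_of_hasDerivAt_of_tendsto_atTop (hc : 0 < c)
    (hV : ∀ t ≥ T, HasDerivAt V (c * V t) t) (hlim : Tendsto V atTop (𝓝 0)) : V T = 0 := by
  have hexp : Tendsto (fun t ↦ Real.exp (-c * (t - T))) atTop (𝓝 0) :=
    Real.tendsto_exp_atBot.comp
      ((tendsto_atTop_add_const_right _ (-T) tendsto_id).const_mul_atTop_of_neg (neg_neg_of_pos hc))
  have hmul : (fun t ↦ V t * Real.exp (-c * (t - T))) =ᶠ[atTop] fun _ ↦ V T := by
    filter_upwards [eventually_ge_atTop T] with t ht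
    rw [eq_mul_exp_of_hasDerivAt (convex_Ici T) hV self_mem_Ici ht, mul_assoc, ← Real.exp_add,
      neg_mul, add_neg_cancel, Real.exp_zero, mul_one]
  exact (tendsto_nhds_unique (by simpa using hlim.mul hexp)
    (tendsto_const_nhds.congr' hmul.symm)).symm

lemma eq_zero_of_hasDerivAt_of_tendsto_atBot (hb : 0 < b)
    (hV : ∀ t ≤ T, HasDerivAt V (-b * V t) t) (hlim : Tendsto V atBot (𝓝 0)) : V T = 0 := by
  have hrev : ∀ t ≥ -T, HasDerivAt (fun s ↦ V (-s)) (b * V (-t)) t := fun t ht ↦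
    ((hV (-t) (neg_le.1 ht)).scomp t (hasDerivAt_neg t)).congr_deriv (by simp)
  simpa using eq_zero_of_hasDerivAt_of_tendsto_atTop hb hrev
    (hlim.comp tendsto_neg_atTop_atBot)

lemma monotoneOn_mul_exp_of_hasDerivAt
    (hV : ∀ t ∈ Icc t₀ t₁, HasDerivAt V (-b * V t + g t) t) (hg : ∀ t ∈ Icc t₀ t₁, 0 ≤ g t) :
    MonotoneOn (fun t ↦ V t * Real.exp (b * t)) (Icc t₀ t₁) := by
  have hderiv : ∀ t ∈ Icc t₀ t₁,
      HasDerivAt (fun t ↦ V t * Real.exp (b * t)) (g t * Real.exp (b * t)) t := fun t ht ↦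
    (hasDerivAt_mul_exp_const_mul b (hV t ht)).congr_deriv (by ring)
  exact monotoneOn_of_hasDerivWithinAt_nonneg (convex_Icc _ _)
    (fun t ht ↦ (hderiv t ht).continuousAt.continuousWithinAt)
    (fun t ht ↦ (hderiv t (interior_subset ht)).hasDerivWithinAt)
    fun t ht ↦ mul_nonneg (hg t (interior_subset ht)) (Real.exp_pos _).le

lemma nonneg_of_hasDerivAt (hV : ∀ t ∈ Icc t₀ t₁, HasDerivAt V (-b * V t + g t) t)
    (hg : ∀ t ∈ Icc t₀ t₁, 0 ≤ g t) (h₀ : 0 ≤ V t₀) {t : ℝ} (ht : t ∈ Icc t₀ t₁) : 0 ≤ V t := by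
  have hmono := monotoneOn_mul_exp_of_hasDerivAt hV hg (left_mem_Icc.2 (ht.1.trans ht.2)) ht ht.1
  exact nonneg_of_mul_nonneg_left ((mul_nonneg h₀ (Real.exp_pos _).le).trans hmono)
    (Real.exp_pos _)

lemma le_div_of_hasDerivAt (hb : 0 < b) (hV : ∀ t ∈ Icc t₀ t₁, HasDerivAt V (-b * V t + g t) t)
    (hg : ∀ t ∈ Icc t₀ t₁, g t ≤ M) (h₀ : V t₀ ≤ M / b) {t : ℝ} (ht : t ∈ Icc t₀ t₁) :
    V t ≤ M / b := by
  have hsub : ∀ t ∈ Icc t₀ t₁,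
      HasDerivAt (fun s ↦ M / b - V s) (-b * (M / b - V t) + (M - g t)) t := fun t ht ↦
    ((hV t ht).const_sub (M / b)).congr_deriv (by field_simp; ring)
  exact sub_nonneg.1 (nonneg_of_hasDerivAt hsub (fun t ht ↦ sub_nonneg.2 (hg t ht))
    (sub_nonneg.2 h₀) ht)

lemma pos_of_hasDerivAt (hV : ∀ t ∈ Icc t₀ t₁, HasDerivAt V (-b * V t + g t) t)
    (hg : ∀ t ∈ Icc t₀ t₁, 0 ≤ g t) (h₀ : 0 ≤ V t₀) {t : ℝ} (ht : t ∈ Ioo t₀ t₁)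
    (hpos : 0 < g t) : 0 < V t₁ := by
  have ht' : t ∈ Icc t₀ t₁ := Ioo_subset_Icc_self ht
  have ht₁ : t₁ ∈ Icc t₀ t₁ := right_mem_Icc.2 (ht'.1.trans ht'.2)
  refine (nonneg_of_hasDerivAt hV hg h₀ ht₁).lt_of_ne fun hzero ↦ hpos.ne ?_
  have hVzero : ∀ x ∈ Icc t₀ t₁, V x = 0 := fun x hx ↦
    le_antisymm (nonpos_of_mul_nonpos_left ((monotoneOn_mul_exp_of_hasDerivAt hV hg hx ht₁
      hx.2).trans_eq (by simp only [← hzero, zero_mul])) (Real.exp_pos _))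
      (nonneg_of_hasDerivAt hV hg h₀ hx)
  have hderiv : HasDerivAt V 0 t := (hasDerivAt_const t (0 : ℝ)).congr_of_eventuallyEq
    (eventually_of_mem (Icc_mem_nhds ht.1 ht.2) hVzero)
  simpa [hVzero t ht'] using hderiv.unique (hV t ht')

end LinearODE

section GradientTrajectories

open scoped Topology

lemma exists_first_exit {X : Type*} [TopologicalSpace X] {γ : ℝ → X} {U : Set X} {t₀ t₂ : ℝ}
    (hγ : Continuous γ) (hU : IsOpen U) (ht : t₀ ≤ t₂) (h₀ : γ t₀ ∈ U) (h₂ : γ t₂ ∉ U) :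
    ∃ t₁ > t₀, γ t₁ ∉ U ∧ ∀ t ∈ Ico t₀ t₁, γ t ∈ U := by
  have hcompact : IsCompact (Icc t₀ t₂ ∩ γ ⁻¹' Uᶜ) :=
    isCompact_Icc.inter_right (hU.isClosed_compl.preimage hγ)
  obtain ⟨t₁, ⟨ht₁, hout⟩, hleast⟩ := hcompact.exists_isLeast ⟨t₂, ⟨ht, le_rfl⟩, h₂⟩
  refine ⟨t₁, ht₁.1.lt_of_ne fun heq ↦ hout (heq ▸ h₀), hout, fun t ht ↦ ?_⟩
  by_contra hnot
  exact ht.2.not_ge (hleast ⟨⟨ht.1, ht.2.le.trans ht₁.2⟩, hnot⟩)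

lemma eqOn_Icc_of_hasDerivAt_of_eq_right {E : Type*} [NormedAddCommGroup E] [NormedSpace ℝ E]
    [FiniteDimensional ℝ E] {F : E → E} (hF : ContDiff ℝ 1 F) {γ δ : ℝ → E} {c d : ℝ}
    (hγ : ∀ t ∈ Icc c d, HasDerivAt γ (F (γ t)) t) (hδ : ∀ t ∈ Icc c d, HasDerivAt δ (F (δ t)) t)
    (h : γ d = δ d) : EqOn γ δ (Icc c d) := by
  have hγc : ContinuousOn γ (Icc c d) := HasDerivAt.continuousOn hγ
  have hδc : ContinuousOn δ (Icc c d) := HasDerivAt.continuousOn hδ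
  obtain ⟨R, hR⟩ := ((isCompact_Icc.image_of_continuousOn hγc).union
    (isCompact_Icc.image_of_continuousOn hδc)).isBounded.subset_closedBall 0
  obtain ⟨K, hK⟩ := (hF.contDiffOn (s := closedBall 0 R)).exists_lipschitzOnWith one_ne_zero
    (convex_closedBall _ _) (isCompact_closedBall _ _)
  obtain ⟨hγR, hδR⟩ := union_subset_iff.1 hR
  have hsub : Ioc c d ⊆ Icc c d := Ioc_subset_Icc_self
  exact ODE_solution_unique_of_mem_Icc_left (v := fun _ ↦ F) (s := fun _ ↦ closedBall 0 R)
    (fun _ _ ↦ hK) hγc (fun t ht ↦ (hγ t (hsub ht)).hasDerivWithinAt)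
    (fun t ht ↦ hγR (mem_image_of_mem γ (hsub ht))) hδc
    (fun t ht ↦ (hδ t (hsub ht)).hasDerivWithinAt)
    (fun t ht ↦ hδR (mem_image_of_mem δ (hsub ht))) h

section Complete

variable {E : Type*} [NormedAddCommGroup E] [InnerProductSpace ℝ E] [CompleteSpace E]
  {ψ : E → ℝ} {γ : ℝ → E} {p : E} {c d : ℝ}

lemma hasDerivAt_comp_gradient_trajectory (hψ : ContDiff ℝ 1 ψ) {t : ℝ}
    (hγ : HasDerivAt γ (gradient ψ (γ t)) t) :
    HasDerivAt (fun s ↦ ψ (γ s)) (‖gradient ψ (γ t)‖ ^ 2) t :=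
  (hasDerivAt_comp_curve (hasGradientAt_of_contDiff hψ _) hγ).congr_deriv
    (real_inner_self_eq_norm_sq _)

lemma monotoneOn_comp_gradient_trajectory (hψ : ContDiff ℝ 1 ψ) {I : Set ℝ} (hI : Convex ℝ I)
    (hγ : ∀ t ∈ I, HasDerivAt γ (gradient ψ (γ t)) t) : MonotoneOn (fun t ↦ ψ (γ t)) I :=
  monotoneOn_of_hasDerivWithinAt_nonneg hI
    (fun t ht ↦ (hasDerivAt_comp_gradient_trajectory hψ (hγ t ht)).continuousAt.continuousWithinAt)
    (fun t ht ↦ (hasDerivAt_comp_gradient_trajectory hψ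
      (hγ t (interior_subset ht))).hasDerivWithinAt)
    fun _ _ ↦ sq_nonneg _

lemma eq_of_gradient_trajectory_of_apply_eq (hψ : ContDiff ℝ 1 ψ) (hcd : c ≤ d)
    (hγ : ∀ t ∈ Icc c d, HasDerivAt γ (gradient ψ (γ t)) t) (h : ψ (γ d) = ψ (γ c)) :
    γ d = γ c := by
  have hmono := monotoneOn_comp_gradient_trajectory hψ (convex_Icc c d) hγ
  have hconst : ∀ t ∈ Icc c d, ψ (γ t) = ψ (γ c) := fun t ht ↦
    le_antisymm ((hmono ht (right_mem_Icc.2 hcd) ht.2).trans_eq h)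
      (hmono (left_mem_Icc.2 hcd) ht ht.1)
  refine constant_of_has_deriv_right_zero (HasDerivAt.continuousOn hγ) (fun t ht ↦ ?_) d
    (right_mem_Icc.2 hcd)
  have ht' : t ∈ Icc c d := Ico_subset_Icc_self ht
  have hzero : HasDerivWithinAt (fun s ↦ ψ (γ s)) 0 (Ici t) t :=
    (hasDerivWithinAt_const t (Ici t) (ψ (γ c))).congr_of_eventuallyEq
      (eventually_of_mem (Icc_mem_nhdsGE ht.2)
        fun s hs ↦ hconst s ⟨ht.1.trans hs.1, hs.2⟩) (hconst t ht')
  have hgrad : gradient ψ (γ t) = 0 := by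
    simpa using (uniqueDiffOn_Ici t t self_mem_Ici).eq_deriv _
      (hasDerivAt_comp_gradient_trajectory hψ (hγ t ht')).hasDerivWithinAt hzero
  simpa only [hgrad] using (hγ t ht').hasDerivWithinAt

lemma apply_le_of_gradient_trajectory_of_tendsto_atBot (hψ : ContDiff ℝ 1 ψ)
    (hγ : ∀ t, HasDerivAt γ (gradient ψ (γ t)) t) (hp : Tendsto γ atBot (𝓝 p)) (t : ℝ) :
    ψ p ≤ ψ (γ t) := by
  have hmono := monotoneOn_comp_gradient_trajectory hψ convex_univ fun t _ ↦ hγ t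
  refine le_of_tendsto ((hψ.continuous.tendsto p).comp hp) ?_
  filter_upwards [eventually_le_atBot t] with s hs using hmono (mem_univ s) (mem_univ t) hs

end Complete

lemma eq_of_gradient_trajectories_meet {E : Type*} [NormedAddCommGroup E]
    [InnerProductSpace ℝ E] [FiniteDimensional ℝ E] {ψ : E → ℝ} {γ δ : ℝ → E} {T S : ℝ}
    (hψ : ContDiff ℝ 2 ψ) (hγ : ∀ t ≥ 0, HasDerivAt γ (gradient ψ (γ t)) t)
    (hδ : ∀ t ≥ 0, HasDerivAt δ (gradient ψ (δ t)) t) (hS : 0 ≤ S) (hST : S ≤ T)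
    (hmeet : γ T = δ S) (hlevel : ψ (γ 0) = ψ (δ 0)) : γ 0 = δ 0 := by
  have hshift : ∀ t ∈ Icc 0 S, HasDerivAt (fun t ↦ γ (t + (T - S)))
      (gradient ψ (γ (t + (T - S)))) t := fun t ht ↦
    (hγ (t + (T - S)) (add_nonneg ht.1 (sub_nonneg.2 hST))).comp_add_const t (T - S)
  have hback : γ (T - S) = δ 0 := by
    simpa using eqOn_Icc_of_hasDerivAt_of_eq_right
      (contDiff_gradient (m := 1) hψ one_add_one_eq_two.le) hshift (fun t ht ↦ hδ t ht.1)
      (by simpa using hmeet) (left_mem_Icc.2 hS)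
  rw [← hback]
  exact (eq_of_gradient_trajectory_of_apply_eq (hψ.of_le one_le_two) (sub_nonneg.2 hST)
    (fun t ht ↦ hγ t ht.1) (by rw [hback, hlevel])).symm

end GradientTrajectories

section Saddle

open scoped Topology

lemma sum_mul_sq_inner_pos {ι E : Type*} [Fintype ι] [NormedAddCommGroup E]
    [InnerProductSpace ℝ E] (e : OrthonormalBasis ι ℝ E) {l : ι → ℝ} (hl : ∀ i, 0 < l i) {v : E}
    (hv : v ≠ 0) : 0 < ∑ i, l i * ⟪e i, v⟫ ^ 2 := by
  obtain ⟨i, hi⟩ : ∃ i, ⟪e i, v⟫ ≠ 0 := by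
    by_contra! hzero
    exact hv (e.repr.map_eq_zero_iff.1 (by ext i; simpa [e.repr_apply_apply] using hzero i))
  exact Finset.sum_pos' (fun j _ ↦ mul_nonneg (hl j).le (sq_nonneg _))
    ⟨i, Finset.mem_univ i, mul_pos (hl i) (sq_pos_of_ne_zero hi)⟩

lemma inner_apply_self_eq_sum_eigenvalues {E : Type*} [NormedAddCommGroup E]
    [InnerProductSpace ℝ E] [FiniteDimensional ℝ E] {T : E →ₗ[ℝ] E} (hT : T.IsSymmetric) {n : ℕ}
    (hn : Module.finrank ℝ E = n) (v : E) :
    ⟪T v, v⟫ = ∑ i, hT.eigenvalues hn i * ⟪hT.eigenvectorBasis hn i, v⟫ ^ 2 := by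
  rw [← (hT.eigenvectorBasis hn).sum_inner_mul_inner (T v) v]
  refine Finset.sum_congr rfl fun i _ ↦ ?_
  rw [hT, hT.apply_eigenvectorBasis, RCLike.ofReal_real_eq_id, id, inner_smul_right,
    real_inner_comm v]
  ring

/-- The model saddle `(a u² - b v²) / 2` in the orthonormal coordinates `u`, `v` given by `e`. -/
def saddleForm (e : OrthonormalBasis (Fin 2) ℝ (Euc 2)) (a b : ℝ) (z : Euc 2) : ℝ :=
  (a * ⟪e 0, z⟫ ^ 2 - b * ⟪e 1, z⟫ ^ 2) / 2

variable {e : OrthonormalBasis (Fin 2) ℝ (Euc 2)} {a b : ℝ} {ψ : Euc 2 → ℝ} {p q : Euc 2}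

lemma hasGradientAt_saddleForm (p x : Euc 2) :
    HasGradientAt (fun y ↦ saddleForm e a b (y - p))
      ((a * ⟪e 0, x - p⟫) • e 0 - (b * ⟪e 1, x - p⟫) • e 1) x := by
  have hu := hasGradientAt_inner_sub (e 0) p x
  have hv := hasGradientAt_inner_sub (e 1) p x
  convert hasGradientAt_add (hasGradientAt_const_mul (a / 2) (hasGradientAt_mul hu hu))
    (hasGradientAt_const_mul (-b / 2) (hasGradientAt_mul hv hv)) using 1
  · ext y
    simp only [saddleForm]
    ring
  · module

lemma inner_zero_smul_sub_smul (e : OrthonormalBasis (Fin 2) ℝ (Euc 2)) (c d : ℝ) :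
    ⟪e 0, c • e 0 - d • e 1⟫ = c := by
  simp [inner_sub_right, inner_smul_right]

lemma inner_one_smul_sub_smul (e : OrthonormalBasis (Fin 2) ℝ (Euc 2)) (c d : ℝ) :
    ⟪e 1, c • e 0 - d • e 1⟫ = -d := by
  simp [inner_sub_right, inner_smul_right]

lemma eq_of_inner_sub_eq (e : OrthonormalBasis (Fin 2) ℝ (Euc 2)) {x y : Euc 2}
    (h₀ : ⟪e 0, x - q⟫ = ⟪e 0, y - q⟫) (h₁ : ⟪e 1, x - q⟫ = ⟪e 1, y - q⟫) : x = y := by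
  have h : ∀ i, ⟪e i, x - q⟫ = ⟪e i, y - q⟫ := Fin.forall_fin_two.2 ⟨h₀, h₁⟩
  exact sub_left_injective (e.repr.injective (by ext i; simpa only [e.repr_apply_apply] using h i))

lemma gradient_eq_of_eventuallyEq_saddleForm {c : ℝ} {x : Euc 2}
    (h : ψ =ᶠ[𝓝 x] fun y ↦ c + saddleForm e a b (y - p)) :
    gradient ψ x = (a * ⟪e 0, x - p⟫) • e 0 - (b * ⟪e 1, x - p⟫) • e 1 := by
  rw [h.gradient_eq, (hasGradientAt_add (hasGradientAt_const x c)
    (hasGradientAt_saddleForm p x)).gradient, zero_add]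

lemma IsQuadraticAt.exists_saddleForm (h : IsQuadraticAt ψ p) (hψ : ContDiff ℝ 2 ψ)
    (hinj : Function.Injective (fderiv ℝ (gradient ψ) p)) (hs : IsSaddleAt (gradient ψ) p) :
    ∃ (e : OrthonormalBasis (Fin 2) ℝ (Euc 2)) (a b : ℝ), 0 < a ∧ 0 < b ∧
      ψ =ᶠ[𝓝 p] fun x ↦ ψ p + saddleForm e a b (x - p) := by
  have hH := isSymmetric_hessian hψ p
  have hn : Module.finrank ℝ (Euc 2) = 2 := finrank_euclideanSpace_fin
  set e := hH.eigenvectorBasis hn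
  set l := hH.eigenvalues hn with hl
  have hquad : ∀ v, ⟪fderiv ℝ (gradient ψ) p v, v⟫ = ∑ i, l i * ⟪e i, v⟫ ^ 2 :=
    inner_apply_self_eq_sum_eigenvalues hH hn
  have hne : ∀ i, l i ≠ 0 := fun i hi ↦ e.orthonormal.ne_zero i <|
    (injective_iff_map_eq_zero _).1 hinj _ <| by
      exact (hH.apply_eigenvectorBasis hn i).trans (by rw [← hl, hi, RCLike.ofReal_zero, zero_smul])
  obtain ⟨hp, hsource, hsink⟩ := hs
  obtain ⟨i, hi⟩ : ∃ i, l i < 0 := by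
    by_contra! hnonneg
    refine hsource ⟨hp, fun v hv ↦ hquad v ▸ ?_⟩
    exact sum_mul_sq_inner_pos e (fun i ↦ (hnonneg i).lt_of_ne' (hne i)) hv
  obtain ⟨j, hj⟩ : ∃ j, 0 < l j := by
    by_contra! hnonpos
    refine hsink ⟨hp, fun v hv ↦ hquad v ▸ neg_pos.1 ?_⟩
    simpa using sum_mul_sq_inner_pos e (fun i ↦ neg_pos.2 ((hnonpos i).lt_of_ne (hne i))) hv
  have hl1 : l 1 < 0 := (hH.eigenvalues_antitone hn (Fin.le_last i)).trans_lt hi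
  have hl0 : 0 < l 0 := hj.trans_le (hH.eigenvalues_antitone hn (Fin.zero_le j))
  refine ⟨e, l 0, -l 1, hl0, neg_pos.2 hl1, h.trans (.of_eq (funext fun x ↦ ?_))⟩
  rw [hquad, Fin.sum_univ_two, saddleForm]
  ring

lemma eventually_forall_inner_of_tendsto_saddle {γ : ℝ → Euc 2} (ha : 0 < a)
    (hform : ψ =ᶠ[𝓝 q] fun x ↦ ψ q + saddleForm e a b (x - q))
    (hγ : ∀ t ≥ 0, HasDerivAt γ (gradient ψ (γ t)) t) (hq : Tendsto γ atTop (𝓝 q)) :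
    ∀ᶠ T in atTop, ⟪e 0, γ T - q⟫ = 0 ∧
      ∀ t ≥ T, ⟪e 1, γ t - q⟫ = ⟪e 1, γ T - q⟫ * Real.exp (-b * (t - T)) := by
  filter_upwards [eventually_forall_ge_atTop.2 ((eventually_ge_atTop 0).and
    (hq.eventually (hform.eventuallyEq_nhds.mono fun _ ↦
      gradient_eq_of_eventuallyEq_saddleForm)))] with T hT
  have hcoord : ∀ i, ∀ t ≥ T, HasDerivAt (fun s ↦ ⟪e i, γ s - q⟫)
      ⟪e i, (a * ⟪e 0, γ t - q⟫) • e 0 - (b * ⟪e 1, γ t - q⟫) • e 1⟫ t := fun i t ht ↦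
    hasDerivAt_comp_curve (ψ := fun y ↦ ⟪e i, y - q⟫) (hasGradientAt_inner_sub (e i) q (γ t))
      ((hγ t (hT t ht).1).congr_deriv (hT t ht).2)
  have hlim : Tendsto (fun t ↦ ⟪e 0, γ t - q⟫) atTop (𝓝 0) := by
    simpa using (tendsto_const_nhds (x := e 0)).inner (hq.sub_const q)
  constructor
  · refine eq_zero_of_hasDerivAt_of_tendsto_atTop (V := fun t ↦ ⟪e 0, γ t - q⟫) ha
      (fun t ht ↦ ?_) hlim
    simpa only [inner_zero_smul_sub_smul] using hcoord 0 t ht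
  · refine fun t ht ↦ eq_mul_exp_of_hasDerivAt (V := fun t ↦ ⟪e 1, γ t - q⟫) (convex_Ici T)
      (fun s hs ↦ ?_) self_mem_Ici ht
    simpa only [inner_one_smul_sub_smul, neg_mul] using hcoord 1 s hs

lemma exists_nonneg_mul_exp_eq {x y : ℝ} (hb : 0 < b) (hsign : SignType.sign x = SignType.sign y)
    (hle : |y| ≤ |x|) : ∃ s ≥ 0, x * Real.exp (-b * s) = y := by
  rcases eq_or_ne x 0 with rfl | hx
  · exact ⟨0, le_rfl, by simpa [eq_comm] using hle⟩
  have hy : y ≠ 0 := by rwa [← sign_ne_zero, ← hsign, sign_ne_zero]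
  have hratio : 0 < |y| / |x| := div_pos (abs_pos.2 hy) (abs_pos.2 hx)
  have hlog : Real.log (|y| / |x|) ≤ 0 :=
    Real.log_nonpos hratio.le (div_le_one_of_le₀ hle (abs_nonneg x))
  refine ⟨-Real.log (|y| / |x|) / b, div_nonneg (neg_nonneg.2 hlog) hb.le, ?_⟩
  calc x * Real.exp (-b * (-Real.log (|y| / |x|) / b))
      = x * (|y| / |x|) := by
        rw [neg_mul, mul_div_cancel₀ _ hb.ne', neg_neg, Real.exp_log hratio]
    _ = SignType.sign x * |x| * (|y| / |x|) := by rw [sign_mul_abs]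
    _ = SignType.sign y * |y| := by
      rw [hsign, mul_assoc, mul_div_cancel₀ _ (abs_ne_zero.2 hx)]
    _ = y := sign_mul_abs y

lemma eq_of_tendsto_saddle_of_sign_eq {γ δ : ℝ → Euc 2} {σ : SignType} (hψ : ContDiff ℝ 2 ψ)
    (ha : 0 < a) (hb : 0 < b) (hform : ψ =ᶠ[𝓝 q] fun x ↦ ψ q + saddleForm e a b (x - q))
    (hγ : ∀ t ≥ 0, HasDerivAt γ (gradient ψ (γ t)) t) (hγq : Tendsto γ atTop (𝓝 q))
    (hδ : ∀ t ≥ 0, HasDerivAt δ (gradient ψ (δ t)) t) (hδq : Tendsto δ atTop (𝓝 q))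
    (hγσ : ∀ᶠ t in atTop, SignType.sign ⟪e 1, γ t - q⟫ = σ)
    (hδσ : ∀ᶠ t in atTop, SignType.sign ⟪e 1, δ t - q⟫ = σ)
    (hlevel : ψ (γ 0) = ψ (δ 0)) : γ 0 = δ 0 := by
  obtain ⟨T, hT, hγT, hδT, hγs, hδs⟩ := ((eventually_ge_atTop 0).and
    ((eventually_forall_ge_atTop.2 (eventually_forall_inner_of_tendsto_saddle ha hform hγ hγq)).and
    ((eventually_forall_ge_atTop.2 (eventually_forall_inner_of_tendsto_saddle ha hform hδ hδq)).and
    (hγσ.and hδσ)))).exists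
  wlog hle : |⟪e 1, δ T - q⟫| ≤ |⟪e 1, γ T - q⟫| generalizing γ δ
  · exact (this hδ hδq hγ hγq hδσ hγσ hlevel.symm hδT hγT hδs hγs (le_of_not_ge hle)).symm
  obtain ⟨s, hs, hexp⟩ := exists_nonneg_mul_exp_eq hb (hγs.trans hδs.symm) hle
  have hTs : T ≤ T + s := le_add_of_nonneg_right hs
  have hmeet : γ (T + s) = δ T := eq_of_inner_sub_eq e
    ((hγT _ hTs).1.trans (hδT T le_rfl).1.symm)
    (by rw [(hγT T le_rfl).2 _ hTs, add_sub_cancel_left, hexp])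
  exact eq_of_gradient_trajectories_meet hψ hγ hδ hT hTs hmeet hlevel

lemma finite_setOf_inForwardBasin_saddle (hψ : ContDiff ℝ 2 ψ) (ha : 0 < a) (hb : 0 < b)
    (hform : ψ =ᶠ[𝓝 q] fun x ↦ ψ q + saddleForm e a b (x - q)) (c : ℝ) :
    {z | InForwardBasin (gradient ψ) q z ∧ ψ z = c}.Finite := by
  let S (σ : SignType) : Set (Euc 2) := {z | ψ z = c ∧ ∃ γ : ℝ → Euc 2, γ 0 = z ∧
    (∀ t ≥ 0, HasDerivAt γ (gradient ψ (γ t)) t) ∧ Tendsto γ atTop (𝓝 q) ∧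
    ∀ᶠ t in atTop, SignType.sign ⟪e 1, γ t - q⟫ = σ}
  have hS (σ) : (S σ).Subsingleton := by
    rintro _ ⟨hc, γ, rfl, hγ, hγq, hγσ⟩ _ ⟨hc', δ, rfl, hδ, hδq, hδσ⟩
    exact eq_of_tendsto_saddle_of_sign_eq hψ ha hb hform hγ hγq hδ hδq hγσ hδσ (hc.trans hc'.symm)
  refine (finite_iUnion fun σ ↦ (hS σ).finite).subset ?_
  rintro _ ⟨⟨γ, rfl, hγ, hγq⟩, hc⟩
  obtain ⟨T, hT⟩ := (eventually_forall_inner_of_tendsto_saddle ha hform hγ hγq).exists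
  refine mem_iUnion.2 ⟨SignType.sign ⟪e 1, γ T - q⟫, hc, γ, rfl, hγ, hγq, ?_⟩
  filter_upwards [eventually_ge_atTop T] with t ht
  rw [hT.2 t ht, sign_mul, sign_pos (Real.exp_pos _), mul_one]

end Saddle

section SaddlePush

open scoped Topology

/-- A smooth cutoff on the line, equal to `1` at `±2` and supported in `1 ≤ |y| ≤ 3`. -/
def annularCutoff (y : ℝ) : ℝ :=
  Real.smoothTransition (y ^ 2 - 1) * Real.smoothTransition (9 - y ^ 2)

lemma contDiff_annularCutoff {n : ℕ∞} : ContDiff ℝ n annularCutoff :=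
  (Real.smoothTransition.contDiff.comp (by fun_prop)).mul
    (Real.smoothTransition.contDiff.comp (by fun_prop))

lemma annularCutoff_mem_Icc (y : ℝ) : annularCutoff y ∈ Icc 0 1 :=
  ⟨mul_nonneg (Real.smoothTransition.nonneg _) (Real.smoothTransition.nonneg _),
    mul_le_one₀ (Real.smoothTransition.le_one _) (Real.smoothTransition.nonneg _)
      (Real.smoothTransition.le_one _)⟩

lemma annularCutoff_eq_one {y : ℝ} (hy : |y| = 2) : annularCutoff y = 1 := by
  have hsq : y ^ 2 = 4 := by rw [← sq_abs, hy]; norm_num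
  rw [annularCutoff, hsq, Real.smoothTransition.one_of_one_le (by norm_num),
    Real.smoothTransition.one_of_one_le (by norm_num), one_mul]

lemma pos_of_smoothTransition_ne_zero {y : ℝ} (hy : Real.smoothTransition y ≠ 0) : 0 < y :=
  not_le.1 (mt Real.smoothTransition.zero_of_nonpos hy)

lemma abs_mem_Icc_of_annularCutoff_ne_zero {y : ℝ} (hy : annularCutoff y ≠ 0) :
    |y| ∈ Icc 1 3 := by
  have hlower := pos_of_smoothTransition_ne_zero (left_ne_zero_of_mul hy)
  have hupper := pos_of_smoothTransition_ne_zero (right_ne_zero_of_mul hy)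
  exact ⟨(one_le_sq_iff_one_le_abs y).1 (by linarith),
    abs_le_of_sq_le_sq (by linarith) (by norm_num)⟩

variable {e : OrthonormalBasis (Fin 2) ℝ (Euc 2)} {p x : Euc 2} {r : ℝ}

/-- The function `v`, cut off to `r ≤ |u| ≤ 3 r`, `|v| ≤ 3 r`, in the orthonormal coordinates
`u`, `v` around `p` given by `e`. Adding a small positive multiple of it to a potential with a
saddle at `p` pushes the trajectories leaving `p` along the `u`-axis towards positive `v`. -/
def saddlePush (e : OrthonormalBasis (Fin 2) ℝ (Euc 2)) (p : Euc 2) (r : ℝ) (x : Euc 2) : ℝ :=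
  ⟪e 1, x - p⟫ * Real.smoothTransition (9 - (⟪e 1, x - p⟫ / r) ^ 2) *
    annularCutoff (⟪e 0, x - p⟫ / r)

lemma contDiff_saddlePush {n : ℕ∞} : ContDiff ℝ n (saddlePush e p r) := by
  have hcoord (i) : ContDiff ℝ n fun x ↦ ⟪e i, x - p⟫ :=
    contDiff_const.inner ℝ (contDiff_id.sub contDiff_const)
  exact ((hcoord 1).mul (Real.smoothTransition.contDiff.comp
    (contDiff_const.sub (((hcoord 1).div_const r).pow 2)))).mul
      (contDiff_annularCutoff.comp ((hcoord 0).div_const r))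

lemma tsupport_saddlePush_subset (hr : 0 < r) : tsupport (saddlePush e p r) ⊆
    {x | r ≤ |⟪e 0, x - p⟫| ∧ |⟪e 0, x - p⟫| ≤ 3 * r ∧ |⟪e 1, x - p⟫| ≤ 3 * r} := by
  have hcoord (i) : Continuous fun x ↦ |⟪e i, x - p⟫| := by fun_prop
  refine closure_minimal (fun x hx ↦ ?_) ((isClosed_le continuous_const (hcoord 0)).inter
    ((isClosed_le (hcoord 0) continuous_const).inter (isClosed_le (hcoord 1) continuous_const)))
  have hu := abs_mem_Icc_of_annularCutoff_ne_zero (right_ne_zero_of_mul hx)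
  have hv := pos_of_smoothTransition_ne_zero (right_ne_zero_of_mul (left_ne_zero_of_mul hx))
  rw [abs_div, abs_of_pos hr, mem_Icc, one_le_div hr, div_le_iff₀ hr] at hu
  have hv' : |⟪e 1, x - p⟫ / r| ≤ 3 := abs_le_of_sq_le_sq (by linarith) (by norm_num)
  rw [abs_div, abs_of_pos hr, div_le_iff₀ hr] at hv'
  exact ⟨hu.1, hu.2, hv'⟩

lemma norm_le_sum_abs_inner {ι E : Type*} [Fintype ι] [NormedAddCommGroup E]
    [InnerProductSpace ℝ E] (e : OrthonormalBasis ι ℝ E) (z : E) : ‖z‖ ≤ ∑ i, |⟪e i, z⟫| :=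
  calc ‖z‖ = ‖∑ i, ⟪e i, z⟫ • e i‖ := by rw [e.sum_repr']
    _ ≤ ∑ i, ‖⟪e i, z⟫ • e i‖ := norm_sum_le _ _
    _ = ∑ i, |⟪e i, z⟫| := by simp [norm_smul]

lemma hasCompactSupport_saddlePush (hr : 0 < r) : HasCompactSupport (saddlePush e p r) := by
  refine (isCompact_closedBall p (6 * r)).of_isClosed_subset (isClosed_tsupport _) fun x hx ↦ ?_
  obtain ⟨-, hu, hv⟩ := tsupport_saddlePush_subset hr hx
  have hnorm := norm_le_sum_abs_inner e (x - p)
  rw [Fin.sum_univ_two] at hnorm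
  rw [mem_closedBall_iff_norm]
  linarith

lemma saddlePush_le_abs (e : OrthonormalBasis (Fin 2) ℝ (Euc 2)) (p : Euc 2) (r : ℝ) (x : Euc 2) :
    saddlePush e p r x ≤ |⟪e 1, x - p⟫| := by
  rw [saddlePush, mul_assoc]
  refine (le_abs_self _).trans ?_
  have hcut := annularCutoff_mem_Icc (⟪e 0, x - p⟫ / r)
  rw [abs_mul, abs_of_nonneg (mul_nonneg (Real.smoothTransition.nonneg _) hcut.1)]
  exact mul_le_of_le_one_right (abs_nonneg _)
    (mul_le_one₀ (Real.smoothTransition.le_one _) hcut.1 hcut.2)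

lemma inner_gradient_saddlePush (hr : 0 < r) (hv : |⟪e 1, x - p⟫| < 2 * r) :
    ⟪e 1, gradient (saddlePush e p r) x⟫ = annularCutoff (⟪e 0, x - p⟫ / r) := by
  have heq : saddlePush e p r =ᶠ[𝓝 x]
      fun y ↦ ⟪e 1, y - p⟫ * annularCutoff (⟪e 0, y - p⟫ / r) := by
    have hcont : Continuous fun y ↦ |⟪e 1, y - p⟫| := by fun_prop
    filter_upwards [hcont.continuousAt.eventually_lt continuousAt_const hv] with y hy
    have hsq : (⟪e 1, y - p⟫ / r) ^ 2 ≤ 2 ^ 2 := by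
      rw [sq_le_sq, abs_div, abs_of_pos hr, abs_two, div_le_iff₀ hr]
      exact hy.le
    rw [saddlePush, Real.smoothTransition.one_of_one_le (by linarith), mul_one]
  have hcut := hasGradientAt_comp
    (ψ := fun y ↦ ⟪e 0, y - p⟫) (g := fun t ↦ annularCutoff (t / r))
    (((contDiff_annularCutoff (n := 1)).differentiable one_ne_zero).comp
      (differentiable_id.div_const r) ⟪e 0, x - p⟫).hasDerivAt (hasGradientAt_inner_sub (e 0) p x)
  rw [heq.gradient_eq, (hasGradientAt_mul (hasGradientAt_inner_sub (e 1) p x) hcut).gradient]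
  simp [inner_add_right, inner_smul_right]

end SaddlePush

section SaddleBox

open scoped Topology

/-- On the box `|u|, |v| < 5 r` in the orthonormal coordinates `u`, `v` around `p` given by `e`,
the function `ψ` is the model saddle `ψ p + (a u² - b v²) / 2`. -/
structure IsSaddleBox (ψ : Euc 2 → ℝ) (p : Euc 2) (e : OrthonormalBasis (Fin 2) ℝ (Euc 2))
    (a b r : ℝ) : Prop where
  a_pos : 0 < a
  b_pos : 0 < b
  r_pos : 0 < r
  apply_eq : ∀ x, |⟪e 0, x - p⟫| < 5 * r → |⟪e 1, x - p⟫| < 5 * r →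
    ψ x = ψ p + saddleForm e a b (x - p)

/-- The potential `ψ` after adding `s` times the push at the saddle `p`. -/
def pushSaddle (ψ : Euc 2 → ℝ) (e : OrthonormalBasis (Fin 2) ℝ (Euc 2)) (p : Euc 2) (r s : ℝ)
    (x : Euc 2) : ℝ :=
  ψ x + s * saddlePush e p r x

variable {ψ : Euc 2 → ℝ} {e : OrthonormalBasis (Fin 2) ℝ (Euc 2)} {p q x : Euc 2} {a b r s : ℝ}

lemma contDiff_pushSaddle {n : ℕ∞} (hψ : ContDiff ℝ n ψ) : ContDiff ℝ n (pushSaddle ψ e p r s) :=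
  hψ.add (contDiff_const.mul contDiff_saddlePush)

lemma pushSaddle_eventuallyEq (hx : x ∉ tsupport (saddlePush e p r)) :
    pushSaddle ψ e p r s =ᶠ[𝓝 x] ψ := by
  filter_upwards [notMem_tsupport_iff_eventuallyEq.1 hx] with y hy
  rw [pushSaddle, hy, Pi.zero_apply, mul_zero, add_zero]

lemma pushSaddle_eventuallyEq_cocompact (hr : 0 < r) :
    pushSaddle ψ e p r s =ᶠ[cocompact (Euc 2)] ψ :=
  eventuallyEq_of_mem (hasCompactSupport_saddlePush hr).compl_mem_cocompact
    fun _ hx ↦ (pushSaddle_eventuallyEq hx).eq_of_nhds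

lemma eventually_isSaddleBox (ha : 0 < a) (hb : 0 < b)
    (hform : ψ =ᶠ[𝓝 p] fun x ↦ ψ p + saddleForm e a b (x - p)) :
    ∀ᶠ r in 𝓝[>] 0, IsSaddleBox ψ p e a b r := by
  obtain ⟨ρ, hρ, hball⟩ := Metric.eventually_nhds_iff.1 hform
  filter_upwards [Ioo_mem_nhdsGT (div_pos hρ (by norm_num : (0 : ℝ) < 10))] with r hr
  refine ⟨ha, hb, hr.1, fun x hu hv ↦ hball ?_⟩
  have hnorm := norm_le_sum_abs_inner e (x - p)
  rw [Fin.sum_univ_two] at hnorm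
  rw [dist_eq_norm]
  linarith [hr.2]

namespace IsSaddleBox

lemma gradient_eq (h : IsSaddleBox ψ p e a b r) (hu : |⟪e 0, x - p⟫| < 5 * r)
    (hv : |⟪e 1, x - p⟫| < 5 * r) :
    gradient ψ x = (a * ⟪e 0, x - p⟫) • e 0 - (b * ⟪e 1, x - p⟫) • e 1 := by
  have hcoord (i) : Continuous fun y ↦ |⟪e i, y - p⟫| := by fun_prop
  refine gradient_eq_of_eventuallyEq_saddleForm (c := ψ p) ?_
  filter_upwards [(hcoord 0).continuousAt.eventually_lt continuousAt_const hu,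
    (hcoord 1).continuousAt.eventually_lt continuousAt_const hv] with y using h.apply_eq y

lemma eq_of_gradient_eq_zero (h : IsSaddleBox ψ p e a b r) (hx : gradient ψ x = 0)
    (hu : |⟪e 0, x - p⟫| < 5 * r) (hv : |⟪e 1, x - p⟫| < 5 * r) : x = p := by
  have hgrad := (h.gradient_eq hu hv).symm.trans hx
  have hu0 := inner_zero_smul_sub_smul e (a * ⟪e 0, x - p⟫) (b * ⟪e 1, x - p⟫)
  have hv0 := inner_one_smul_sub_smul e (a * ⟪e 0, x - p⟫) (b * ⟪e 1, x - p⟫)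
  rw [hgrad, inner_zero_right] at hu0 hv0
  refine eq_of_inner_sub_eq (q := p) e ?_ ?_
  · simpa [h.a_pos.ne'] using hu0
  · simpa [h.b_pos.ne'] using hv0

lemma notMem_tsupport (h : IsSaddleBox ψ p e a b r) (hx : gradient ψ x = 0) :
    x ∉ tsupport (saddlePush e p r) := by
  intro hmem
  obtain ⟨hr, hu, hv⟩ := tsupport_saddlePush_subset h.r_pos hmem
  have hpos := h.r_pos
  obtain rfl := h.eq_of_gradient_eq_zero hx (by linarith) (by linarith)
  rw [sub_self, inner_zero_right, abs_zero] at hr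
  exact hr.not_gt hpos

lemma inner_gradient_pushSaddle (h : IsSaddleBox ψ p e a b r) (hψ : ContDiff ℝ 1 ψ)
    (hu : |⟪e 0, x - p⟫| < 5 * r) (hv : |⟪e 1, x - p⟫| < 2 * r) :
    ⟪e 1, gradient (pushSaddle ψ e p r s) x⟫ =
      -b * ⟪e 1, x - p⟫ + s * annularCutoff (⟪e 0, x - p⟫ / r) := by
  have hpush := hasGradientAt_add (hasGradientAt_of_contDiff hψ x) (hasGradientAt_const_mul s
    (hasGradientAt_of_contDiff (contDiff_saddlePush (e := e) (p := p) (r := r)) x))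
  have hr := h.r_pos
  rw [show gradient (pushSaddle ψ e p r s) x = _ from hpush.gradient, inner_add_right,
    h.gradient_eq hu (by linarith), inner_one_smul_sub_smul, inner_smul_right,
    inner_gradient_saddlePush hr hv, neg_mul]

lemma pushSaddle_lt (h : IsSaddleBox ψ p e a b r) (hs : s ∈ Ioo 0 (min (a * r / 2) (b * r)))
    (hu : |⟪e 0, x - p⟫| ≤ 3 * r) (hv : |⟪e 1, x - p⟫| ≤ 3 * r) :
    pushSaddle ψ e p r s x < ψ p + 6 * a * r ^ 2 := by
  have ha := h.a_pos
  have hr := h.r_pos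
  have hform : saddleForm e a b (x - p) ≤ 9 / 2 * a * r ^ 2 := by
    have hsq : a * ⟪e 0, x - p⟫ ^ 2 ≤ a * (3 * r) ^ 2 := by
      rw [← sq_abs ⟪e 0, x - p⟫]
      gcongr
    have hneg : 0 ≤ b * ⟪e 1, x - p⟫ ^ 2 := mul_nonneg h.b_pos.le (sq_nonneg _)
    rw [saddleForm]
    linarith
  have hpush : s * saddlePush e p r x < 3 / 2 * a * r ^ 2 :=
    calc s * saddlePush e p r x ≤ s * (3 * r) :=
          mul_le_mul_of_nonneg_left ((saddlePush_le_abs e p r x).trans hv) hs.1.le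
      _ < a * r / 2 * (3 * r) := by
        gcongr
        exact (lt_min_iff.1 hs.2).1
      _ = 3 / 2 * a * r ^ 2 := by ring
  rw [pushSaddle, h.apply_eq x (by linarith) (by linarith)]
  linarith

lemma notMem_tsupport_of_le (h : IsSaddleBox ψ p e a b r)
    (hs : s ∈ Ioo 0 (min (a * r / 2) (b * r)))
    (hx : ψ p + 6 * a * r ^ 2 ≤ pushSaddle ψ e p r s x) : x ∉ tsupport (saddlePush e p r) := by
  intro hmem
  obtain ⟨-, hu, hv⟩ := tsupport_saddlePush_subset h.r_pos hmem
  exact hx.not_gt (h.pushSaddle_lt hs hu hv)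

lemma le_pushSaddle (h : IsSaddleBox ψ p e a b r) (hs : s ∈ Ioo 0 (min (a * r / 2) (b * r)))
    (hu : |⟪e 0, x - p⟫| ∈ Ico (4 * r) (5 * r)) (hv : ⟪e 1, x - p⟫ ∈ Icc 0 (s / b)) :
    ψ p + 6 * a * r ^ 2 ≤ pushSaddle ψ e p r s x := by
  have ha := h.a_pos
  have hb := h.b_pos
  have hr := h.r_pos
  obtain ⟨hsa, hsb⟩ := lt_min_iff.1 hs.2
  have hvr : ⟪e 1, x - p⟫ < r := hv.2.trans_lt ((div_lt_iff₀' hb).2 hsb)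
  have hnot : x ∉ tsupport (saddlePush e p r) := fun hmem ↦ by
    linarith [(tsupport_saddlePush_subset hr hmem).2.1, hu.1]
  have hsqu : a * (4 * r) ^ 2 ≤ a * ⟪e 0, x - p⟫ ^ 2 := by
    rw [← sq_abs ⟪e 0, x - p⟫]
    gcongr
    exact hu.1
  have hsqv : b * ⟪e 1, x - p⟫ ^ 2 ≤ a * r / 2 * r :=
    calc b * ⟪e 1, x - p⟫ ^ 2 = b * ⟪e 1, x - p⟫ * ⟪e 1, x - p⟫ := by ring
      _ ≤ a * r / 2 * r := mul_le_mul (((le_div_iff₀' hb).1 hv.2).trans hsa.le) hvr.le hv.1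
        (by positivity)
  rw [(pushSaddle_eventuallyEq hnot).eq_of_nhds, h.apply_eq x hu.2
    (by rw [abs_of_nonneg hv.1]; linarith), saddleForm]
  nlinarith [mul_pos ha (pow_pos hr 2)]

end IsSaddleBox

end SaddleBox

section Crossing

open scoped Topology

namespace IsSaddleBox

variable {ψ : Euc 2 → ℝ} {e : OrthonormalBasis (Fin 2) ℝ (Euc 2)} {p q : Euc 2} {a b r s : ℝ}
  {γ : ℝ → Euc 2}

lemma hasDerivAt_inner (h : IsSaddleBox ψ p e a b r) (hψ : ContDiff ℝ 1 ψ) {t : ℝ}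
    (hγ : HasDerivAt γ (gradient (pushSaddle ψ e p r s) (γ t)) t)
    (hu : |⟪e 0, γ t - p⟫| < 5 * r) (hv : |⟪e 1, γ t - p⟫| < 2 * r) :
    HasDerivAt (fun t ↦ ⟪e 1, γ t - p⟫)
      (-b * ⟪e 1, γ t - p⟫ + s * annularCutoff (⟪e 0, γ t - p⟫ / r)) t :=
  (hasDerivAt_comp_curve (ψ := fun y ↦ ⟪e 1, y - p⟫) (hasGradientAt_inner_sub (e 1) p (γ t))
    hγ).congr_deriv (h.inner_gradient_pushSaddle hψ hu hv)

lemma exists_inner_eq_zero (h : IsSaddleBox ψ p e a b r) (hψ : ContDiff ℝ 1 ψ)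
    (hγ : IsTrajectory (gradient (pushSaddle ψ e p r s)) γ) (hp : Tendsto γ atBot (𝓝 p)) :
    ∃ t, |⟪e 0, γ t - p⟫| < r ∧ ⟪e 1, γ t - p⟫ = 0 := by
  have hr := h.r_pos
  have hlim (i) : Tendsto (fun t ↦ ⟪e i, γ t - p⟫) atBot (𝓝 0) := by
    simpa using (tendsto_const_nhds (x := e i)).inner (hp.sub_const p)
  have hsmall (i) : ∀ᶠ t in atBot, |⟪e i, γ t - p⟫| < r :=
    (hlim i).abs.eventually_lt_const (by rwa [abs_zero])
  obtain ⟨T, hT⟩ := eventually_atBot.1 ((hsmall 0).and (hsmall 1))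
  refine ⟨T, (hT T le_rfl).1, eq_zero_of_hasDerivAt_of_tendsto_atBot
    (V := fun t ↦ ⟪e 1, γ t - p⟫) h.b_pos (fun t ht ↦ ?_) (hlim 1)⟩
  obtain ⟨hu, hv⟩ := hT t ht
  have hcut : annularCutoff (⟪e 0, γ t - p⟫ / r) = 0 := by
    by_contra hne
    have hone := (abs_mem_Icc_of_annularCutoff_ne_zero hne).1
    rw [abs_div, abs_of_pos hr, one_le_div hr] at hone
    exact hone.not_gt hu
  simpa only [hcut, mul_zero, add_zero] using
    h.hasDerivAt_inner hψ (hγ t) (by linarith) (by linarith)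

lemma exists_first_exit_box (h : IsSaddleBox ψ p e a b r) (hγ : Continuous γ)
    (hq : Tendsto γ atTop (𝓝 q)) (hq0 : gradient ψ q = 0) (hqp : q ≠ p) {t₀ : ℝ}
    (hu : |⟪e 0, γ t₀ - p⟫| < r) (hv : ⟪e 1, γ t₀ - p⟫ = 0) :
    ∃ t₁ > t₀, (4 * r ≤ |⟪e 0, γ t₁ - p⟫| ∨ r ≤ |⟪e 1, γ t₁ - p⟫|) ∧
      ∀ t ∈ Icc t₀ t₁, |⟪e 0, γ t - p⟫| ≤ 4 * r ∧ |⟪e 1, γ t - p⟫| ≤ r := by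
  have hr := h.r_pos
  have hcoord (i) : Continuous fun x ↦ |⟪e i, x - p⟫| := by fun_prop
  let W : Set (Euc 2) := {x | |⟪e 0, x - p⟫| < 4 * r ∧ |⟪e 1, x - p⟫| < r}
  let C : Set (Euc 2) := {x | |⟪e 0, x - p⟫| ≤ 4 * r ∧ |⟪e 1, x - p⟫| ≤ r}
  have hW : IsOpen W :=
    (isOpen_lt (hcoord 0) continuous_const).inter (isOpen_lt (hcoord 1) continuous_const)
  have hC : IsClosed C :=
    (isClosed_le (hcoord 0) continuous_const).inter (isClosed_le (hcoord 1) continuous_const)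
  have hWC : W ⊆ C := fun x hx ↦ ⟨hx.1.le, hx.2.le⟩
  obtain ⟨t₂, ht₂, hout⟩ : ∃ t₂ ≥ t₀, γ t₂ ∉ W := by
    by_contra! hin
    have hqC : q ∈ C := hC.mem_of_tendsto hq
      ((eventually_ge_atTop t₀).mono fun t ht ↦ hWC (hin t ht))
    exact hqp (h.eq_of_gradient_eq_zero hq0 (by linarith [hqC.1]) (by linarith [hqC.2]))
  have ht₀ : γ t₀ ∈ W := ⟨by linarith, by rwa [hv, abs_zero]⟩
  obtain ⟨t₁, ht₁, hnot, hin⟩ := exists_first_exit hγ hW ht₂ ht₀ hout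
  refine ⟨t₁, ht₁, ?_, ?_⟩
  · by_contra! hlt
    exact hnot hlt
  · rw [← closure_Ico ht₁.ne]
    exact (hC.preimage hγ).closure_subset_iff.2 fun t ht ↦ hWC (hin t ht)

lemma exists_exit (h : IsSaddleBox ψ p e a b r) (hs : s ∈ Ioo 0 (min (a * r / 2) (b * r)))
    (hψ : ContDiff ℝ 1 ψ) (hγ : IsTrajectory (gradient (pushSaddle ψ e p r s)) γ)
    (hp : Tendsto γ atBot (𝓝 p)) (hq : Tendsto γ atTop (𝓝 q)) (hq0 : gradient ψ q = 0)
    (hqp : q ≠ p) :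
    ∃ t₀ t₁, t₀ ≤ t₁ ∧ |⟪e 0, γ t₀ - p⟫| < r ∧ ⟪e 1, γ t₀ - p⟫ = 0 ∧
      4 * r ≤ |⟪e 0, γ t₁ - p⟫| ∧
      ∀ t ∈ Icc t₀ t₁, |⟪e 0, γ t - p⟫| ≤ 4 * r ∧ ⟪e 1, γ t - p⟫ ∈ Icc 0 (s / b) := by
  have hr := h.r_pos
  obtain ⟨t₀, hu₀, hv₀⟩ := h.exists_inner_eq_zero hψ hγ hp
  obtain ⟨t₁, ht, hexit, hin⟩ := h.exists_first_exit_box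
    (continuous_iff_continuousAt.2 fun t ↦ (hγ t).continuousAt) hq hq0 hqp hu₀ hv₀
  have hderiv : ∀ t ∈ Icc t₀ t₁, HasDerivAt (fun t ↦ ⟪e 1, γ t - p⟫)
      (-b * ⟪e 1, γ t - p⟫ + s * annularCutoff (⟪e 0, γ t - p⟫ / r)) t := fun t ht ↦
    h.hasDerivAt_inner hψ (hγ t) (by linarith [(hin t ht).1]) (by linarith [(hin t ht).2])
  have hv : ∀ t ∈ Icc t₀ t₁, ⟪e 1, γ t - p⟫ ∈ Icc 0 (s / b) := fun t ht ↦
    ⟨nonneg_of_hasDerivAt hderiv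
      (fun _ _ ↦ mul_nonneg hs.1.le (annularCutoff_mem_Icc _).1) hv₀.ge ht,
    le_div_of_hasDerivAt h.b_pos hderiv
      (fun _ _ ↦ mul_le_of_le_one_right hs.1.le (annularCutoff_mem_Icc _).2)
      (hv₀.trans_le (div_nonneg hs.1.le h.b_pos.le)) ht⟩
  refine ⟨t₀, t₁, ht.le, hu₀, hv₀, hexit.resolve_right (not_le.2 ?_), fun t ht ↦
    ⟨(hin t ht).1, hv t ht⟩⟩
  have hv₁ := hv t₁ (right_mem_Icc.2 ht.le)
  rw [abs_of_nonneg hv₁.1]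
  exact hv₁.2.trans_lt ((div_lt_iff₀' h.b_pos).2 (lt_min_iff.1 hs.2).2)

lemma inner_pos_of_lt (h : IsSaddleBox ψ p e a b r) (hs : 0 < s) (hψ : ContDiff ℝ 1 ψ)
    (hγ : IsTrajectory (gradient (pushSaddle ψ e p r s)) γ) {t₀ τ : ℝ} (ht : t₀ ≤ τ)
    (hu₀ : |⟪e 0, γ t₀ - p⟫| < 2 * r) (hv₀ : 0 ≤ ⟪e 1, γ t₀ - p⟫)
    (huτ : 2 * r < |⟪e 0, γ τ - p⟫|)
    (hin : ∀ t ∈ Icc t₀ τ, |⟪e 0, γ t - p⟫| < 5 * r ∧ |⟪e 1, γ t - p⟫| < 2 * r) :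
    0 < ⟪e 1, γ τ - p⟫ := by
  have hγc : Continuous γ := continuous_iff_continuousAt.2 fun t ↦ (hγ t).continuousAt
  have hcont : Continuous fun t ↦ |⟪e 0, γ t - p⟫| := by fun_prop
  obtain ⟨w, hw, huw⟩ := intermediate_value_Ioo ht hcont.continuousOn ⟨hu₀, huτ⟩
  refine pos_of_hasDerivAt (V := fun t ↦ ⟪e 1, γ t - p⟫)
    (fun t ht ↦ h.hasDerivAt_inner hψ (hγ t) (hin t ht).1 (hin t ht).2)
    (fun t _ ↦ mul_nonneg hs.le (annularCutoff_mem_Icc _).1) hv₀ hw ?_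
  rw [annularCutoff_eq_one, mul_one]
  · exact hs
  · rw [abs_div, abs_of_pos h.r_pos, div_eq_iff h.r_pos.ne']
    exact huw

lemma exists_crossing (h : IsSaddleBox ψ p e a b r) (hs : s ∈ Ioo 0 (min (a * r / 2) (b * r)))
    (hψ : ContDiff ℝ 1 ψ) (hγ : IsTrajectory (gradient (pushSaddle ψ e p r s)) γ)
    (hp : Tendsto γ atBot (𝓝 p)) (hq : Tendsto γ atTop (𝓝 q)) (hq0 : gradient ψ q = 0)
    (hqp : q ≠ p) :
    ∃ τ, ψ (γ τ) = ψ p + 6 * a * r ^ 2 ∧ ⟪e 1, γ τ - p⟫ ∈ Ioc 0 (s / b) ∧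
      ∀ t ≥ τ, HasDerivAt γ (gradient ψ (γ t)) t := by
  have hr := h.r_pos
  have hsr : s / b < r := (div_lt_iff₀' h.b_pos).2 (lt_min_iff.1 hs.2).2
  obtain ⟨t₀, t₁, ht, hu₀, hv₀, hu₁, hin⟩ := h.exists_exit hs hψ hγ hp hq hq0 hqp
  have hv : ∀ t ∈ Icc t₀ t₁, |⟪e 1, γ t - p⟫| < r := fun t ht ↦ by
    rw [abs_of_nonneg (hin t ht).2.1]
    exact (hin t ht).2.2.trans_lt hsr
  have hpush : ContDiff ℝ 1 (pushSaddle ψ e p r s) := contDiff_pushSaddle hψ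
  have hγc : Continuous γ := continuous_iff_continuousAt.2 fun t ↦ (hγ t).continuousAt
  have henergy₁ : ψ p + 6 * a * r ^ 2 ≤ pushSaddle ψ e p r s (γ t₁) :=
    have ht₁ := hin t₁ (right_mem_Icc.2 ht)
    h.le_pushSaddle hs ⟨hu₁, by linarith [ht₁.1]⟩ ht₁.2
  obtain ⟨τ, hτ, hlevel⟩ := intermediate_value_Icc ht (hpush.continuous.comp hγc).continuousOn
    ⟨(h.pushSaddle_lt hs (by linarith) (by rw [hv₀, abs_zero]; positivity)).le, henergy₁⟩
  have huτ : 3 * r < |⟪e 0, γ τ - p⟫| := by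
    by_contra! hle
    exact (h.pushSaddle_lt hs hle (by linarith [hv τ hτ])).ne hlevel
  have hoff : ∀ t ≥ τ, γ t ∉ tsupport (saddlePush e p r) := fun t ht ↦
    h.notMem_tsupport_of_le hs <| hlevel.ge.trans <|
      monotoneOn_comp_gradient_trajectory hpush convex_univ (fun t _ ↦ hγ t) (mem_univ τ)
        (mem_univ t) ht
  refine ⟨τ, ?_, ⟨?_, (hin τ hτ).2.2⟩, fun t ht ↦ ?_⟩
  · rw [← hlevel]
    exact (pushSaddle_eventuallyEq (hoff τ le_rfl)).eq_of_nhds.symm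
  · refine h.inner_pos_of_lt hs.1 hψ hγ hτ.1 (by linarith) hv₀.ge (by linarith) fun t ht ↦ ?_
    have ht' : t ∈ Icc t₀ t₁ := ⟨ht.1, ht.2.trans hτ.2⟩
    exact ⟨by linarith [(hin t ht').1], by linarith [hv t ht']⟩
  · rw [← (pushSaddle_eventuallyEq (hoff t ht)).gradient_eq]
    exact hγ t

end IsSaddleBox

end Crossing

section SaddleConnections

open scoped Topology

/-- No trajectory of `ẋ = f(x)` runs from the saddle `p` to another saddle. Connections are broken
one starting point at a time, so this refines `NoSaddleConnection`. -/
def NoSaddleConnectionFrom (f : Euc 2 → Euc 2) (p : Euc 2) : Prop :=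
  ∀ γ q, IsTrajectory f γ → IsSaddleAt f p → IsSaddleAt f q → p ≠ q →
    Tendsto γ atBot (𝓝 p) → ¬ Tendsto γ atTop (𝓝 q)

lemma noSaddleConnection_of_forall_from {f : Euc 2 → Euc 2}
    (h : ∀ p, f p = 0 → NoSaddleConnectionFrom f p) : NoSaddleConnection f :=
  fun ⟨γ, p, q, hγ, hp, hq, hpq, hbot, htop⟩ ↦ h p hp.1 γ q hγ hp hq hpq hbot htop

lemma isSaddleAt_congr {f g : Euc 2 → Euc 2} {p : Euc 2} (h : f =ᶠ[𝓝 p] g) :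
    IsSaddleAt f p ↔ IsSaddleAt g p := by
  simp only [IsSaddleAt, IsSourceAt, IsSinkAt, h.fderiv_eq, h.eq_of_nhds]

variable {ψ : Euc 2 → ℝ} {Z T : Finset (Euc 2)} {e : OrthonormalBasis (Fin 2) ℝ (Euc 2)}
  {p x : Euc 2} {a b r s : ℝ}

lemma IsMorseWith.exists_saddleForm (h : IsMorseWith ψ Z) (hquad : IsQuadraticAt ψ p)
    (hp : IsSaddleAt (gradient ψ) p) :
    ∃ e a b, 0 < a ∧ 0 < b ∧ ψ =ᶠ[𝓝 p] fun x ↦ ψ p + saddleForm e a b (x - p) :=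
  hquad.exists_saddleForm h.contDiff
    (h.bijective_hessian p ((h.gradient_eq_zero_iff p).1 hp.1)).injective hp

lemma IsMorseWith.finite_setOf_exists_inForwardBasin_saddle (h : IsMorseWith ψ Z)
    (hquad : ∀ q ∈ Z, IsQuadraticAt ψ q) (c : ℝ) :
    {z | ∃ q, IsSaddleAt (gradient ψ) q ∧ InForwardBasin (gradient ψ) q z ∧ ψ z = c}.Finite := by
  have hsaddle : {q | IsSaddleAt (gradient ψ) q}.Finite :=
    Z.finite_toSet.subset fun q hq ↦ (h.gradient_eq_zero_iff q).1 hq.1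
  refine (hsaddle.biUnion
    (t := fun q ↦ {z | InForwardBasin (gradient ψ) q z ∧ ψ z = c}) fun q hq ↦ ?_).subset ?_
  · obtain ⟨e, a, b, ha, hb, hform⟩ :=
      h.exists_saddleForm (hquad q ((h.gradient_eq_zero_iff q).1 hq.1)) hq
    exact finite_setOf_inForwardBasin_saddle h.contDiff ha hb hform c
  · rintro z ⟨q, hq, hz⟩
    exact mem_biUnion hq hz

namespace IsSaddleBox

lemma isSaddleAt_pushSaddle_iff (h : IsSaddleBox ψ p e a b r) (hx : gradient ψ x = 0) :
    IsSaddleAt (gradient (pushSaddle ψ e p r s)) x ↔ IsSaddleAt (gradient ψ) x :=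
  isSaddleAt_congr (pushSaddle_eventuallyEq (h.notMem_tsupport hx)).gradient

lemma eventually_mem_Ioo (h : IsSaddleBox ψ p e a b r) :
    ∀ᶠ s in 𝓝[>] 0, s ∈ Ioo 0 (min (a * r / 2) (b * r)) :=
  Ioo_mem_nhdsGT (lt_min (half_pos (mul_pos h.a_pos h.r_pos)) (mul_pos h.b_pos h.r_pos))

lemma eventually_isMorseWith (h : IsSaddleBox ψ p e a b r) (hψ : IsMorseWith ψ Z) :
    ∀ᶠ s in 𝓝 0, IsMorseWith (pushSaddle ψ e p r s) Z :=
  hψ.eventually_add_const_mul (contDiff_saddlePush (n := 2)) (hasCompactSupport_saddlePush h.r_pos)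
    fun _ hx ↦ gradient_eventuallyEq_zero <|
      notMem_tsupport_iff_eventuallyEq.1 (h.notMem_tsupport (hψ.gradient_eq_zero hx))

lemma exists_inForwardBasin (h : IsSaddleBox ψ p e a b r)
    (hs : s ∈ Ioo 0 (min (a * r / 2) (b * r))) (hψ : IsMorseWith ψ Z)
    (hpush : IsMorseWith (pushSaddle ψ e p r s) Z)
    (hconn : ¬ NoSaddleConnectionFrom (gradient (pushSaddle ψ e p r s)) p) :
    ∃ z q, IsSaddleAt (gradient ψ) q ∧ InForwardBasin (gradient ψ) q z ∧
      ψ z = ψ p + 6 * a * r ^ 2 ∧ ⟪e 1, z - p⟫ ∈ Ioc 0 (s / b) := by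
  rw [NoSaddleConnectionFrom] at hconn
  push Not at hconn
  obtain ⟨γ, q, hγ, -, hq, hpq, hbot, htop⟩ := hconn
  have hq0 : gradient ψ q = 0 :=
    hψ.gradient_eq_zero ((hpush.gradient_eq_zero_iff q).1 hq.1)
  obtain ⟨τ, hlevel, hv, hderiv⟩ := h.exists_crossing hs hψ.contDiff_one hγ hbot htop hq0 hpq.symm
  refine ⟨γ τ, q, (h.isSaddleAt_pushSaddle_iff hq0).1 hq,
    ⟨fun t ↦ γ (t + τ), congrArg γ (zero_add τ), fun t ht ↦ ?_, ?_⟩, hlevel, hv⟩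
  · exact (hderiv (t + τ) (le_add_of_nonneg_left ht)).comp_add_const t τ
  · exact htop.comp (tendsto_atTop_add_const_right _ τ tendsto_id)

/-- A surviving connection must cross the level `ψ p + 6 a r²` at one of the finitely many points
which flow into a saddle, at height `v ∈ (0, s / b]`; for small `s` there is no such point. -/
lemma eventually_noSaddleConnectionFrom (h : IsSaddleBox ψ p e a b r) (hψ : IsMorseWith ψ Z)
    (hquad : ∀ q ∈ Z, IsQuadraticAt ψ q) :
    ∀ᶠ s in 𝓝[>] 0, NoSaddleConnectionFrom (gradient (pushSaddle ψ e p r s)) p := by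
  have hdiv : Tendsto (fun s ↦ s / b) (𝓝[>] 0) (𝓝 0) := by
    have hcont : Continuous fun s : ℝ ↦ s / b := by fun_prop
    exact tendsto_nhdsWithin_of_tendsto_nhds (hcont.tendsto' 0 0 (zero_div b))
  have havoid := (eventually_all_finite
    (hψ.finite_setOf_exists_inForwardBasin_saddle hquad (ψ p + 6 * a * r ^ 2))).2 fun z _ ↦
      show ∀ᶠ s in 𝓝[>] 0, ⟪e 1, z - p⟫ ∉ Ioc 0 (s / b) by
        rcases le_or_gt ⟪e 1, z - p⟫ 0 with hz | hz
        · exact .of_forall fun s hmem ↦ hz.not_gt hmem.1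
        · filter_upwards [hdiv.eventually_lt_const hz] with s hs hmem using hmem.2.not_gt hs
  filter_upwards [h.eventually_mem_Ioo, nhdsWithin_le_nhds (h.eventually_isMorseWith hψ), havoid]
    with s hs hpush hs_avoid
  by_contra hconn
  obtain ⟨z, q, hq, hz, hlevel, hv⟩ := h.exists_inForwardBasin hs hψ hpush hconn
  exact hs_avoid z ⟨q, hq, hz, hlevel⟩ hv

lemma noSaddleConnectionFrom_pushSaddle (h : IsSaddleBox ψ p e a b r)
    (hs : s ∈ Ioo 0 (min (a * r / 2) (b * r))) (hψ : IsMorseWith ψ Z)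
    (hpush : IsMorseWith (pushSaddle ψ e p r s) Z) (hx : ψ p + 6 * a * r ^ 2 < ψ x)
    (hconn : NoSaddleConnectionFrom (gradient ψ) x) :
    NoSaddleConnectionFrom (gradient (pushSaddle ψ e p r s)) x := by
  intro γ q hγ hsx hsq hxq hbot htop
  have hcrit {y} (hy : IsSaddleAt (gradient (pushSaddle ψ e p r s)) y) : gradient ψ y = 0 :=
    hψ.gradient_eq_zero ((hpush.gradient_eq_zero_iff y).1 hy.1)
  have henergy (t : ℝ) : ψ p + 6 * a * r ^ 2 ≤ pushSaddle ψ e p r s (γ t) := by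
    refine hx.le.trans ?_
    rw [← (pushSaddle_eventuallyEq (ψ := ψ) (s := s) (h.notMem_tsupport (hcrit hsx))).eq_of_nhds]
    exact apply_le_of_gradient_trajectory_of_tendsto_atBot hpush.contDiff_one hγ hbot t
  have hγ' : IsTrajectory (gradient ψ) γ := fun t ↦ by
    rw [← (pushSaddle_eventuallyEq (h.notMem_tsupport_of_le hs (henergy t))).gradient_eq]
    exact hγ t
  exact hconn γ q hγ' ((h.isSaddleAt_pushSaddle_iff (hcrit hsx)).1 hsx)
    ((h.isSaddleAt_pushSaddle_iff (hcrit hsq)).1 hsq) hxq hbot htop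

end IsSaddleBox

lemma exists_isSaddleBox_forall_lt (ha : 0 < a) (hb : 0 < b)
    (hform : ψ =ᶠ[𝓝 p] fun x ↦ ψ p + saddleForm e a b (x - p)) (hT : ∀ x ∈ T, ψ p < ψ x) :
    ∃ r, IsSaddleBox ψ p e a b r ∧ ∀ x ∈ T, ψ p + 6 * a * r ^ 2 < ψ x := by
  have hlevel : ∀ᶠ r in 𝓝[>] (0 : ℝ), ∀ x ∈ T, ψ p + 6 * a * r ^ 2 < ψ x := by
    refine (eventually_all_finset T).2 fun x hx ↦ nhdsWithin_le_nhds ?_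
    have hcont : Continuous fun r : ℝ ↦ ψ p + 6 * a * r ^ 2 := by fun_prop
    exact hcont.continuousAt.eventually_lt continuousAt_const (by simpa using hT x hx)
  exact ((eventually_isSaddleBox ha hb hform).and hlevel).exists

namespace IsMorseWith

/-- The push at `p` takes place below the level of the points of `T`, so trajectories leaving those
points never feel it. -/
lemma exists_noSaddleConnectionFrom_insert [DecidableEq (Euc 2)] (h : IsMorseWith ψ Z)
    (hquad : ∀ q ∈ Z, IsQuadraticAt ψ q) (hp : p ∈ Z) (hT : ∀ x ∈ T, ψ p < ψ x)
    (hconn : ∀ x ∈ T, NoSaddleConnectionFrom (gradient ψ) x) :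
    ∃ φ, IsMorseWith φ Z ∧ φ =ᶠ[cocompact (Euc 2)] ψ ∧ (∀ q ∈ Z, φ =ᶠ[𝓝 q] ψ) ∧
      ∀ x ∈ insert p T, NoSaddleConnectionFrom (gradient φ) x := by
  by_cases hsaddle : IsSaddleAt (gradient ψ) p
  · obtain ⟨e, a, b, ha, hb, hform⟩ := h.exists_saddleForm (hquad p hp) hsaddle
    obtain ⟨r, hbox, hlevel⟩ := exists_isSaddleBox_forall_lt ha hb hform hT
    obtain ⟨s, hs, hpush, hfrom⟩ := (hbox.eventually_mem_Ioo.and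
      ((eventually_nhdsWithin_of_eventually_nhds (hbox.eventually_isMorseWith h)).and
        (hbox.eventually_noSaddleConnectionFrom h hquad))).exists
    refine ⟨pushSaddle ψ e p r s, hpush, pushSaddle_eventuallyEq_cocompact hbox.r_pos,
      fun q hq ↦ pushSaddle_eventuallyEq (hbox.notMem_tsupport (h.gradient_eq_zero hq)), ?_⟩
    exact Finset.forall_mem_insert _ _ _ |>.2 ⟨hfrom, fun x hx ↦
      hbox.noSaddleConnectionFrom_pushSaddle hs h hpush (hlevel x hx) (hconn x hx)⟩
  · refine ⟨ψ, h, .rfl, fun _ _ ↦ .rfl, (Finset.forall_mem_insert _ _ _).2 ⟨?_, hconn⟩⟩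
    exact fun _ _ _ hp' ↦ absurd hp' hsaddle

lemma exists_noSaddleConnection (h : IsMorseWith ψ Z) (hquad : ∀ q ∈ Z, IsQuadraticAt ψ q)
    (hinj : InjOn ψ Z) :
    ∃ φ, IsMorseWith φ Z ∧ φ =ᶠ[cocompact (Euc 2)] ψ ∧ InjOn φ Z ∧
      NoSaddleConnection (gradient φ) := by
  classical
  suffices hsub : ∀ S ⊆ Z, ∃ φ, IsMorseWith φ Z ∧ φ =ᶠ[cocompact (Euc 2)] ψ ∧
      (∀ q ∈ Z, φ =ᶠ[𝓝 q] ψ) ∧ ∀ x ∈ S, NoSaddleConnectionFrom (gradient φ) x by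
    obtain ⟨φ, hφ, hco, heq, hconn⟩ := hsub Z subset_rfl
    exact ⟨φ, hφ, hco, hinj.congr fun q hq ↦ (heq q hq).eq_of_nhds.symm,
      noSaddleConnection_of_forall_from fun p hp ↦ hconn p ((hφ.gradient_eq_zero_iff p).1 hp)⟩
  intro S
  induction S using Finset.induction_on_min_value ψ with
  | empty => exact fun _ ↦ ⟨ψ, h, .rfl, fun _ _ ↦ .rfl, by simp⟩
  | insert p T hpT hmin ih =>
    intro hS
    obtain ⟨hp, hTZ⟩ := Finset.insert_subset_iff.1 hS
    obtain ⟨φ, hφ, hco, heq, hconn⟩ := ih hTZ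
    have hlt : ∀ x ∈ T, φ p < φ x := fun x hx ↦ by
      rw [(heq p hp).eq_of_nhds, (heq x (hTZ hx)).eq_of_nhds]
      exact (hmin x hx).lt_of_ne (hinj.ne hp (hTZ hx) (ne_of_mem_of_not_mem hx hpT).symm)
    obtain ⟨χ, hχ, hχco, hχeq, hχconn⟩ := hφ.exists_noSaddleConnectionFrom_insert
      (fun q hq ↦ (hquad q hq).congr (heq q hq)) hp hlt hconn
    exact ⟨χ, hχ, hχco.trans hco, fun q hq ↦ (hχeq q hq).trans (heq q hq), hχconn⟩

end IsMorseWith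

end SaddleConnections

/-- every proper gradient map `f : ℝ² → ℝ²` is proper gradient homotopic to a
generic proper gradient map. -/
theorem proper_gradient_homotopic_to_generic (f : Euc 2 → Euc 2)
    (hgrad : IsGradient f) (hprop : IsProper f) :
    ∃ f' : Euc 2 → Euc 2, IsGenericGradient f' ∧ IsProper f' ∧
      ProperGradientHomotopic f f' := by
  obtain ⟨φ, hφ, hφf⟩ := hgrad
  obtain rfl : gradient φ = f := funext hφf
  obtain ⟨ψ₁, hψ₁, hbij, hbound₁⟩ := exists_contDiff_bijective_hessian_norm_gradient_sub_le hφ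
  have hψ₁_one : ContDiff ℝ 1 ψ₁ := hψ₁.of_le one_le_two
  have hproper₁ : IsProper (gradient ψ₁) :=
    isProper_of_norm_sub_le hprop (continuous_gradient hψ₁_one) hbound₁
  obtain ⟨Z, hmorse₁⟩ := exists_isMorseWith_of_isProper hψ₁ hproper₁ hbij
  obtain ⟨ψ₂, hmorse₂, hco₂, hquad, hinj⟩ := hmorse₁.exists_isQuadraticAt_injOn
  obtain ⟨ψ, hmorse, hco, hvalues, hconn⟩ := hmorse₂.exists_noSaddleConnection hquad hinj
  obtain ⟨C, hC⟩ := exists_norm_gradient_sub_le_of_eventuallyEq_cocompact hψ₁_one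
    hmorse.contDiff_one (hco.trans hco₂)
  have hbound (x : Euc 2) : ‖gradient ψ x - gradient φ x‖ ≤ C + 2 :=
    (norm_sub_le_norm_sub_add_norm_sub _ _ _).trans (add_le_add (hC x) (hbound₁ x))
  have hcrit {p : Euc 2} (hp : gradient ψ p = 0) : p ∈ Z := (hmorse.gradient_eq_zero_iff p).1 hp
  refine ⟨gradient ψ, ⟨ψ, hmorse.contDiff, fun _ ↦ rfl, fun p hp ↦
      hmorse.bijective_hessian p (hcrit hp), fun p q hp hq ↦ hvalues (hcrit hp) (hcrit hq), hconn⟩,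
    isProper_of_norm_sub_le hprop (continuous_gradient hmorse.contDiff_one) hbound,
    properGradientHomotopic_of_norm_gradient_sub_le hφ hmorse.contDiff_one hprop hbound⟩
end
end

section
/- Let f = ∇φ : ℝ² → ℝ² be a generic proper gradient map with local flow η, let x be a source of f, and assume the set B_f of saddles of f is nonempty. Then there exists a saddle y ∈ B_f such that x and y are connected by a trajectory of η, i.e., there is z ∈ ℝ² with η^t(z) → x as t → −∞ and η^t(z) → y as t → ∞. -/
open Set Metric Filter

noncomputable section

open scoped RealInnerProductSpace

/-!
Cut `f` off outside a large ball, so that the flow is complete. The points whose orbits emanate from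
the source `x` form an open set `W`, which does not contain the given saddle `y₀`. Since sinks are
isolated, hence countable, some path `Γ` joins `x` to `y₀` avoiding them. Suppose that no orbit
emanating from `x` ends at a saddle. As `‖f‖` is bounded below at infinity, an orbit in `W` along
which `φ` stays bounded by `max_Γ φ` stays in a fixed ball, so by LaSalle's principle it converges
to a critical point, necessarily a sink. Every orbit in `W` other than `x` therefore either rises
above `max_Γ φ` or is attracted by a sink, and so do its neighbours; hence the orbits starting on a
small sphere around `x` leave `Γ` after a uniform time. So `Γ ∩ W` lies in a compact subset of `W`,
and by connectedness `Γ ⊆ W`, contradicting `y₀ ∉ W`.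
-/

open scoped Topology

section UnstableSet

variable {X : Type*} [TopologicalSpace X] {η : Flow ℝ X} {p z : X} {B Γ : Set X}

/-- The unstable set of `p` under a flow `η`: the points whose orbits tend to `p` as
`t → -∞`. -/
def unstableSet (η : Flow ℝ X) (p : X) : Set X :=
  {z | Tendsto (fun t => η t z) atBot (𝓝 p)}

lemma flow_mem_unstableSet_iff (t : ℝ) : η t z ∈ unstableSet η p ↔ z ∈ unstableSet η p := by
  have key : ∀ s w, w ∈ unstableSet η p → η s w ∈ unstableSet η p := fun s w hw =>
    (hw.comp (tendsto_atBot_add_const_right atBot s tendsto_id)).congr fun r => η.map_add r s w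
  refine ⟨fun h => ?_, key t z⟩
  simpa only [← η.map_add, neg_add_cancel, η.map_zero_apply] using key (-t) _ h

lemma isOpen_unstableSet (h : unstableSet η p ∈ 𝓝 p) : IsOpen (unstableSet η p) := by
  refine isOpen_iff_mem_nhds.2 fun z hz => ?_
  obtain ⟨t, ht⟩ := (hz.eventually (eventually_mem_nhds_iff.2 h)).exists
  filter_upwards [(η.continuous_toFun t).continuousAt ht] with w hw
  exact (flow_mem_unstableSet_iff t).1 hw

lemma eq_of_mem_unstableSet_of_fixed [T2Space X] (hz : z ∈ unstableSet η p)
    (hfix : ∀ t, η t z = z) : z = p := by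
  refine tendsto_nhds_unique (tendsto_const_nhds (f := (atBot : Filter ℝ))) ?_
  exact hz.congr hfix

lemma exists_nonpos_flow_mem_frontier (hB : B ∈ 𝓝 p) (hz : z ∈ unstableSet η p) (hzB : z ∉ B) :
    ∃ t ≤ 0, η t z ∈ frontier B := by
  have hcont : Continuous fun t : Iic (0 : ℝ) => η t z := by fun_prop
  have : PreconnectedSpace (Iic (0 : ℝ)) := Subtype.preconnectedSpace isPreconnected_Iic
  obtain ⟨s, hsB, hs⟩ := ((hz.eventually hB).and (eventually_le_atBot 0)).exists
  have hne : (frontier ((fun t : Iic (0 : ℝ) => η t z) ⁻¹' B)).Nonempty := by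
    refine nonempty_frontier_iff.2 ⟨⟨⟨s, hs⟩, hsB⟩, fun h => hzB ?_⟩
    simpa only [mem_preimage, η.map_zero_apply] using
      h.superset (mem_univ (⟨0, self_mem_Iic⟩ : Iic (0 : ℝ)))
  obtain ⟨t, ht⟩ := hne
  exact ⟨t, t.2, hcont.frontier_preimage_subset B ht⟩

/-- A preconnected set `Γ` that the orbits leaving `B` eventually avoid meets the unstable set of
`p` only in the compact set swept out by `B` in bounded time; hence it cannot leave the (open)
unstable set. -/
theorem subset_unstableSet_of_isPreconnected [T2Space X] (hΓ : IsPreconnected Γ) (hpΓ : p ∈ Γ)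
    (hBc : IsCompact B) (hBp : B ∈ 𝓝 p) (hBW : B ⊆ unstableSet η p)
    (hescape : ∀ z ∈ frontier B, ∀ᶠ q : X × ℝ in 𝓝 z ×ˢ atTop, η q.2 q.1 ∉ Γ) :
    Γ ⊆ unstableSet η p := by
  have hFB : frontier B ⊆ B := hBc.isClosed.frontier_subset
  have hFc : IsCompact (frontier B) := hBc.of_isClosed_subset isClosed_frontier hFB
  obtain ⟨T, hT⟩ : ∃ T, ∀ z ∈ frontier B, ∀ t ≥ T, η t z ∉ Γ := by
    obtain ⟨U, hU, V, hV, hUV⟩ := mem_prod_iff.1 (hFc.mem_nhdsSet_prod_of_forall hescape)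
    obtain ⟨T, hT⟩ := mem_atTop_sets.1 hV
    exact ⟨T, fun z hz t ht => @hUV (z, t) ⟨subset_of_mem_nhdsSet hU hz, hT t ht⟩⟩
  set C : Set X := B ∪ (fun q : ℝ × X => η q.1 q.2) '' (Icc 0 T ×ˢ frontier B)
  have hCc : IsCompact C :=
    hBc.union ((isCompact_Icc.prod hFc).image (η.continuous continuous_fst continuous_snd))
  have hCW : C ⊆ unstableSet η p := by
    rintro _ (hz | ⟨⟨t, z⟩, ⟨-, hz⟩, rfl⟩)
    exacts [hBW hz, (flow_mem_unstableSet_iff t).2 (hBW (hFB hz))]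
  have hΓC : Γ ∩ unstableSet η p ⊆ C := by
    rintro z ⟨hzΓ, hzW⟩
    refine or_iff_not_imp_left.2 fun hzB => ?_
    obtain ⟨t, ht, htF⟩ := exists_nonpos_flow_mem_frontier hBp hzW hzB
    have hback : η (-t) (η t z) = z := by rw [← η.map_add, neg_add_cancel, η.map_zero_apply]
    have htT : -t ≤ T := le_of_not_ge fun h => hT _ htF (-t) h (hback.symm ▸ hzΓ)
    exact ⟨(-t, η t z), ⟨⟨neg_nonneg.2 ht, htT⟩, htF⟩, hback⟩
  by_contra hnot
  obtain ⟨z, hzΓ, hzW⟩ := not_subset.1 hnot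
  obtain ⟨w, hwΓ, hwW, hwC⟩ := hΓ _ Cᶜ (isOpen_unstableSet (mem_of_superset hBp hBW))
    hCc.isClosed.isOpen_compl
    (fun w _ => (em (w ∈ C)).imp (fun h => hCW h) id)
    ⟨p, hpΓ, hBW (mem_of_mem_nhds hBp)⟩ ⟨z, hzΓ, fun h => hzW (hCW h)⟩
  exact hwC (hΓC ⟨hwΓ, hwW⟩)

end UnstableSet

/-- A form of LaSalle's invariance principle: at each cluster point of the orbit of `z` as `t → ∞`,
`V` and all its translates along the flow take the same value `⨆ t, V (η t z)`. -/
theorem exists_tendsto_of_monotone_of_injOn {X : Type*} [TopologicalSpace X] {η : Flow ℝ X}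
    {V : X → ℝ} {K : Set X} {z : X} (hV : Continuous V) (hmono : Monotone fun t => V (η t z))
    (hK : IsCompact K) (hzK : ∀ᶠ t in atTop, η t z ∈ K)
    (hinj : InjOn V {p ∈ K | ∀ t, V (η t p) = V p}) :
    ∃ p ∈ K, (∀ t, V (η t p) = V p) ∧ Tendsto (fun t => η t z) atTop (𝓝 p) := by
  have hbdd : BddAbove (range fun t => V (η t z)) := by
    obtain ⟨M, hM⟩ := hK.bddAbove_image hV.continuousOn
    refine ⟨M, forall_mem_range.2 fun t => ?_⟩
    obtain ⟨s, hs, hts⟩ := (hzK.and (eventually_ge_atTop t)).exists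
    exact (hmono hts).trans (hM (mem_image_of_mem V hs))
  have hlim := tendsto_atTop_ciSup hmono hbdd
  set l := ⨆ t, V (η t z)
  have hcluster : ∀ p, MapClusterPt p atTop (fun t => η t z) → ∀ s, V (η s p) = l := by
    intro p hp s
    have hshift : Tendsto ((fun w => V (η s w)) ∘ fun t => η t z) atTop (𝓝 l) :=
      (hlim.comp (tendsto_atTop_add_const_left atTop s tendsto_id)).congr fun t =>
        congrArg V (η.map_add s t z)
    have hVp : MapClusterPt (V (η s p)) atTop ((fun w => V (η s w)) ∘ fun t => η t z) :=
      MapClusterPt.continuousAt_comp (f := fun w => V (η s w))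
        (hV.comp (η.continuous_toFun s)).continuousAt hp
    exact eq_of_nhds_neBot (ClusterPt.mono hVp hshift)
  have hconst : ∀ p, MapClusterPt p atTop (fun t => η t z) →
      V p = l ∧ ∀ t, V (η t p) = V p := by
    intro p hp
    have h0 : V p = l := by simpa only [η.map_zero_apply] using hcluster p hp 0
    exact ⟨h0, fun t => (hcluster p hp t).trans h0.symm⟩
  obtain ⟨p, hpK, hp⟩ := hK.exists_mapClusterPt (le_principal_iff.2 hzK)
  refine ⟨p, hpK, (hconst p hp).2, hK.tendsto_nhds_of_unique_mapClusterPt hzK fun q hqK hq => ?_⟩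
  exact hinj ⟨hqK, (hconst q hq).2⟩ ⟨hpK, (hconst p hp).2⟩
    ((hconst q hq).1.trans (hconst p hp).1.symm)

section Attracting

variable {X : Type*} [TopologicalSpace X] {η : Flow ℝ X} {p z : X}

/-- `p` uniformly attracts one of its neighbourhoods `U`: `η t w → p` as `t → ∞`, uniformly in
`w ∈ U`. The point `p` is repelling when it is attracting for `η.reverse`. -/
def IsAttracting (η : Flow ℝ X) (p : X) : Prop :=
  ∃ U ∈ 𝓝 p, Tendsto (fun q : X × ℝ => η q.2 q.1) (𝓟 U ×ˢ atTop) (𝓝 p)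

lemma IsAttracting.tendsto_prod (hp : IsAttracting η p)
    (hz : Tendsto (fun t => η t z) atTop (𝓝 p)) :
    Tendsto (fun q : X × ℝ => η q.2 q.1) (𝓝 z ×ˢ atTop) (𝓝 p) := by
  obtain ⟨U, hU, hlim⟩ := hp
  obtain ⟨T, hT⟩ := (hz.eventually (eventually_mem_nhds_iff.2 hU)).exists
  have hTU : Tendsto (η T) (𝓝 z) (𝓟 U) :=
    tendsto_principal.2 ((η.continuous_toFun T).continuousAt hT)
  refine (hlim.comp (hTU.prodMap (tendsto_atTop_add_const_right _ (-T) tendsto_id))).congr ?_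
  rintro ⟨w, t⟩
  simp [← η.map_add]

lemma IsAttracting.unstableSet_mem_nhds (hp : IsAttracting η.reverse p) :
    unstableSet η p ∈ 𝓝 p := by
  obtain ⟨U, hU, hlim⟩ := hp
  filter_upwards [hU] with z hz
  have hzU : Tendsto (fun _ : ℝ => z) atBot (𝓟 U) :=
    tendsto_principal.2 (Eventually.of_forall fun _ => hz)
  refine (hlim.comp (hzU.prodMk tendsto_neg_atBot_atTop)).congr fun t => ?_
  simp

lemma IsAttracting.eq_of_tendsto_atTop [T2Space X] (hp : IsAttracting η.reverse p)
    (hz : Tendsto (fun t => η t z) atTop (𝓝 p)) : z = p := by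
  obtain ⟨U, hU, hlim⟩ := hp
  refine tendsto_nhds_unique (tendsto_const_nhds (f := (atTop : Filter ℝ))) ?_
  have hzU : Tendsto (fun t => η t z) atTop (𝓟 U) := tendsto_principal.2 (hz.eventually_mem hU)
  refine (hlim.comp (hzU.prodMk tendsto_id)).congr fun t => ?_
  simp [← η.map_add, η.map_zero_apply]

end Attracting

section GlobalFlow

variable {E : Type*} [NormedAddCommGroup E] [NormedSpace ℝ E] {η : Flow ℝ E} {g : E → E}
  {K L : NNReal} {p : E}

/-- `η` is the flow of the autonomous vector field `g`: all its orbits solve `ẋ = g(x)`. -/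
def IsFlowOf (η : Flow ℝ E) (g : E → E) : Prop :=
  ∀ z, IsIntegralCurve (fun t => η t z) (fun _ => g)

lemma isIntegralCurve_comp_neg {γ : ℝ → E} (hγ : IsIntegralCurve γ fun _ => g) :
    IsIntegralCurve (fun t => γ (-t)) fun _ => -g := fun t => by
  simpa only [Function.comp_def, neg_one_smul, Pi.neg_apply] using
    (hγ (-t)).scomp t (hasDerivAt_neg t)

lemma IsFlowOf.reverse (hη : IsFlowOf η g) : IsFlowOf η.reverse (-g) := fun z =>
  isIntegralCurve_comp_neg (hη z)

lemma dist_le_of_isIntegralCurve {γ γ' : ℝ → E} (hg : LipschitzWith K g)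
    (hγ : IsIntegralCurve γ fun _ => g) (hγ' : IsIntegralCurve γ' fun _ => g) (t : ℝ) :
    dist (γ t) (γ' t) ≤ dist (γ 0) (γ' 0) * Real.exp (K * |t|) := by
  wlog ht : 0 ≤ t generalizing g γ γ' t
  · simpa using this hg.neg (isIntegralCurve_comp_neg hγ) (isIntegralCurve_comp_neg hγ') (-t)
      (neg_nonneg.2 (not_le.1 ht).le)
  simpa only [abs_of_nonneg ht, sub_zero] using
    dist_le_of_trajectories_ODE (fun _ => hg) hγ.continuous.continuousOn
      (fun s _ => (hγ s).hasDerivWithinAt) hγ'.continuous.continuousOn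
      (fun s _ => (hγ' s).hasDerivWithinAt) le_rfl t ⟨ht, le_rfl⟩

lemma isIntegralCurve_eq_of_lipschitzWith {γ γ' : ℝ → E} (hg : LipschitzWith K g)
    (hγ : IsIntegralCurve γ fun _ => g) (hγ' : IsIntegralCurve γ' fun _ => g)
    (h0 : γ 0 = γ' 0) : γ = γ' :=
  ODE_solution_unique_univ (s := fun _ => univ) (fun _ => hg.lipschitzOnWith)
    (fun t => ⟨hγ t, mem_univ _⟩) (fun t => ⟨hγ' t, mem_univ _⟩) h0

lemma IsFlowOf.flow_eq_self_of_eq_zero (hη : IsFlowOf η g) (hg : LipschitzWith K g)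
    (hp : g p = 0) (t : ℝ) : η t p = p :=
  congrFun (isIntegralCurve_eq_of_lipschitzWith hg (hη p) (isIntegralCurve_const fun _ => hp)
    (η.map_zero_apply p)) t

lemma exists_isIntegralCurve_of_bounded [CompleteSpace E] (hgC : ContDiff ℝ 1 g)
    (hg : LipschitzWith K g) (hL : ∀ z, ‖g z‖ ≤ L) (z : E) :
    ∃ γ : ℝ → E, γ 0 = z ∧ IsIntegralCurve γ fun _ => g := by
  have hlocal : ∀ z : E, ∃ γ : ℝ → E, γ 0 = z ∧
      IsMIntegralCurveOn (I := modelWithCornersSelf ℝ E) γ g (Ioo (-1) 1) := by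
    intro z
    have hPL : IsPicardLindelof (fun _ => g)
        (⟨0, by norm_num, by norm_num⟩ : Icc (-1 : ℝ) 1) z L 0 L K :=
      .of_time_independent (fun w _ => hL w) hg.lipschitzOnWith (by simp)
    obtain ⟨γ, hγ0, hγ⟩ := hPL.exists_eq_forall_mem_Icc_hasDerivWithinAt₀
    have hγ' : ∀ t ∈ Ioo (-1) 1, HasDerivWithinAt γ (g (γ t)) (Ioo (-1) 1) t := fun t ht =>
      (hγ t (Ioo_subset_Icc_self ht)).mono Ioo_subset_Icc_self
    exact ⟨γ, hγ0, fun t ht => (hγ' t ht).hasFDerivWithinAt.hasMFDerivWithinAt⟩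
  obtain ⟨γ, hγ0, hγ⟩ := exists_isMIntegralCurve_of_isMIntegralCurveOn
    (contMDiff_vectorSpace_iff_contDiff.2 hgC) one_pos hlocal z
  refine ⟨γ, hγ0, fun t => ?_⟩
  have hderiv : HasFDerivAt γ ((1 : ℝ →L[ℝ] ℝ).smulRight (g (γ t))) t := (hγ t).hasFDerivAt
  simpa using hderiv.hasDerivAt

theorem exists_isFlowOf_of_hasCompactSupport [CompleteSpace E] (hgC : ContDiff ℝ 1 g)
    (hgs : HasCompactSupport g) : ∃ η : Flow ℝ E, IsFlowOf η g := by
  obtain ⟨K, hK⟩ := hgC.lipschitzWith_of_hasCompactSupport hgs one_ne_zero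
  obtain ⟨L, hL⟩ := hgs.exists_bound_of_continuous hgC.continuous
  have hL' : ∀ z, ‖g z‖ ≤ L.toNNReal := fun z => (hL z).trans (Real.le_coe_toNNReal L)
  choose γ hγ0 hγ using exists_isIntegralCurve_of_bounded hgC hK hL'
  have hadd : ∀ s t z, γ z (s + t) = γ (γ z t) s := fun s t z =>
    congrFun (isIntegralCurve_eq_of_lipschitzWith hK ((hγ z).comp_add t) (hγ (γ z t))
      (by simp [hγ0])) s
  have hcont : ∀ t, Continuous fun z => γ z t := fun t => by
    have hlip : LipschitzWith (Real.exp (K * |t|)).toNNReal fun z => γ z t := by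
      refine .of_dist_le_mul fun y z => ?_
      rw [Real.coe_toNNReal _ (Real.exp_pos _).le, mul_comm]
      simpa only [hγ0] using dist_le_of_isIntegralCurve hK (hγ y) (hγ z) t
    exact hlip.continuous
  have hcont₂ : Continuous fun q : ℝ × E => γ q.2 q.1 := by
    refine continuous_prod_of_continuous_lipschitzWith _ L.toNNReal hcont fun z => ?_
    refine lipschitzWith_of_nnnorm_deriv_le (fun t => (hγ z t).differentiableAt) fun t => ?_
    rw [(hγ z t).deriv]
    exact hL' _
  exact ⟨⟨fun t z => γ z t, hcont₂, hadd, hγ0⟩, hγ⟩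

end GlobalFlow

section SourcesAndSinks

variable {E : Type*} [NormedAddCommGroup E] [InnerProductSpace ℝ E] {f g : E → E} {p : E}

/-- `p` is a source of the vector field `f` on an inner product space: a zero at which the
derivative is positive definite. On `ℝ²` this is `IsSourceAt`. -/
def IsSource (f : E → E) (p : E) : Prop :=
  f p = 0 ∧ ∀ v : E, v ≠ 0 → 0 < ⟪fderiv ℝ f p v, v⟫

/-- `p` is a sink of the vector field `f` on an inner product space: a zero at which the
derivative is negative definite. On `ℝ²` this is `IsSinkAt`. -/
def IsSink (f : E → E) (p : E) : Prop :=
  f p = 0 ∧ ∀ v : E, v ≠ 0 → ⟪fderiv ℝ f p v, v⟫ < 0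

/-- `p` is a saddle of `f`: a zero which is neither a source nor a sink. It may be degenerate. On
`ℝ²` this is `IsSaddleAt`. -/
def IsSaddle (f : E → E) (p : E) : Prop :=
  f p = 0 ∧ ¬ IsSource f p ∧ ¬ IsSink f p

lemma isSource_neg_iff : IsSource (-f) p ↔ IsSink f p := by
  simp only [IsSource, IsSink, Pi.neg_apply, neg_eq_zero, fderiv_neg,
    neg_apply, inner_neg_left, neg_pos]

lemma isSink_neg_iff : IsSink (-f) p ↔ IsSource f p := by
  rw [← isSource_neg_iff, neg_neg]

lemma IsSource.congr (hp : IsSource f p) (hfg : f =ᶠ[𝓝 p] g) : IsSource g p := by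
  simpa only [IsSource, hfg.eq_of_nhds, hfg.fderiv_eq] using hp

lemma IsSink.congr (hp : IsSink f p) (hfg : f =ᶠ[𝓝 p] g) : IsSink g p := by
  simpa only [IsSink, hfg.eq_of_nhds, hfg.fderiv_eq] using hp

lemma IsSource.not_isSink [Nontrivial E] (hp : IsSource f p) : ¬ IsSink f p := fun hsink =>
  let ⟨v, hv⟩ := exists_ne (0 : E)
  lt_asymm (hp.2 v hv) (hsink.2 v hv)

lemma exists_mul_sq_norm_le_inner_of_pos [FiniteDimensional ℝ E] {A : E →L[ℝ] E}
    (hA : ∀ v, v ≠ 0 → 0 < ⟪A v, v⟫) : ∃ c > 0, ∀ v, c * ‖v‖ ^ 2 ≤ ⟪A v, v⟫ := by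
  rcases subsingleton_or_nontrivial E with _ | _
  · exact ⟨1, one_pos, fun v => by simp [Subsingleton.elim v 0]⟩
  obtain ⟨v₀, hv₀, hmin⟩ := (isCompact_sphere (0 : E) 1).exists_isMinOn
    (NormedSpace.sphere_nonempty.2 zero_le_one) (f := fun v => ⟪A v, v⟫) (by fun_prop)
  refine ⟨⟪A v₀, v₀⟫, hA v₀ (ne_zero_of_mem_unit_sphere ⟨v₀, hv₀⟩), fun v => ?_⟩
  rcases eq_or_ne v 0 with rfl | hv
  · simp
  have hnorm : ‖v‖ ≠ 0 := norm_ne_zero_iff.2 hv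
  have hunit : ‖v‖⁻¹ • v ∈ sphere (0 : E) 1 := by simp [norm_smul, hnorm]
  calc ⟪A v₀, v₀⟫ * ‖v‖ ^ 2 ≤ ⟪A (‖v‖⁻¹ • v), ‖v‖⁻¹ • v⟫ * ‖v‖ ^ 2 := by
        gcongr
        exact hmin hunit
    _ = ⟪A v, v⟫ := by
        rw [map_smul, real_inner_smul_left, real_inner_smul_right]
        field_simp

lemma IsSource.exists_mul_sq_norm_le_inner [FiniteDimensional ℝ E] (hp : IsSource f p)
    (hd : DifferentiableAt ℝ f p) :
    ∃ c > 0, ∀ᶠ z in 𝓝 p, c * ‖z - p‖ ^ 2 ≤ ⟪f z, z - p⟫ := by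
  obtain ⟨c, hc, hA⟩ := exists_mul_sq_norm_le_inner_of_pos hp.2
  refine ⟨c / 2, half_pos hc, ?_⟩
  filter_upwards [hd.hasFDerivAt.isLittleO.bound (half_pos hc)] with z hz
  rw [hp.1, sub_zero] at hz
  have herr : |⟪f z - fderiv ℝ f p (z - p), z - p⟫| ≤ c / 2 * ‖z - p‖ * ‖z - p‖ :=
    (abs_real_inner_le_norm _ _).trans (by gcongr)
  rw [inner_sub_left] at herr
  linarith [(abs_le.1 herr).1, hA (z - p)]

lemma IsSink.exists_mul_sq_norm_le_neg_inner [FiniteDimensional ℝ E] (hp : IsSink f p)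
    (hd : DifferentiableAt ℝ f p) :
    ∃ c > 0, ∀ᶠ z in 𝓝 p, c * ‖z - p‖ ^ 2 ≤ -⟪f z, z - p⟫ := by
  simpa only [Pi.neg_apply, inner_neg_left] using
    (isSource_neg_iff.2 hp).exists_mul_sq_norm_le_inner hd.neg

lemma countable_setOf_isSink [FiniteDimensional ℝ E] (hf : Differentiable ℝ f) :
    {p | IsSink f p}.Countable := by
  have : DiscreteTopology {p | IsSink f p} := by
    refine discreteTopology_subtype_iff'.2 fun p hp => ?_
    obtain ⟨c, hc, hest⟩ := hp.exists_mul_sq_norm_le_neg_inner (hf p)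
    obtain ⟨U, hU, hUo, hpU⟩ := _root_.eventually_nhds_iff.1 hest
    refine ⟨U, hUo, eq_singleton_iff_unique_mem.2 ⟨⟨hpU, hp⟩, fun q hq => ?_⟩⟩
    have hle : c * ‖q - p‖ ^ 2 ≤ 0 := by simpa [hq.2.1] using hU q hq.1
    have hzero : ‖q - p‖ ^ 2 ≤ 0 := nonpos_of_mul_nonpos_right hle hc
    simpa [sub_eq_zero] using hzero.antisymm (sq_nonneg _)
  exact (HereditarilyLindelofSpace.isLindelof _).countable this

lemma sq_norm_sub_le_of_mul_sq_norm_le_neg_inner {γ : ℝ → E} {c ρ t : ℝ} (hc : 0 < c)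
    (hρ : 0 < ρ) (hγ : IsIntegralCurve γ fun _ => f) (h0 : γ 0 ∈ closedBall p ρ)
    (hin : ∀ z ∈ closedBall p ρ, c * ‖z - p‖ ^ 2 ≤ -⟪f z, z - p⟫) (ht : 0 ≤ t) :
    ‖γ t - p‖ ^ 2 ≤ ρ ^ 2 * Real.exp (-c * t) := by
  have hu : ∀ s, HasDerivAt (fun s => ‖γ s - p‖ ^ 2) (2 * ⟪γ s - p, f (γ s)⟫) s := fun s =>
    ((hγ s).sub_const p).norm_sq
  have hB : ∀ s, HasDerivAt (fun s => ρ ^ 2 * Real.exp (-c * s))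
      (ρ ^ 2 * (Real.exp (-c * s) * -c)) s := fun s => by
    simpa using (((hasDerivAt_id s).const_mul (-c)).exp).const_mul (ρ ^ 2)
  refine image_le_of_deriv_right_lt_deriv_boundary (a := 0) (b := t)
    (fun s _ => (hu s).continuousAt.continuousWithinAt)
    (fun s _ => (hu s).hasDerivWithinAt) ?_ hB ?_ ⟨ht, le_rfl⟩
  · rw [mem_closedBall_iff_norm] at h0
    simpa using pow_le_pow_left₀ (norm_nonneg _) h0 2
  · intro s hs htouch
    have hpos : 0 < ρ ^ 2 * Real.exp (-c * s) := by positivity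
    have hexp : Real.exp (-c * s) ≤ 1 := Real.exp_le_one_iff.2 (by nlinarith [hs.1])
    have hmem : γ s ∈ closedBall p ρ := by
      rw [mem_closedBall_iff_norm, ← sq_le_sq₀ (norm_nonneg _) hρ.le, htouch]
      exact mul_le_of_le_one_right (sq_nonneg ρ) hexp
    have hdecr := hin _ hmem
    rw [htouch] at hdecr
    rw [real_inner_comm]
    nlinarith

theorem IsSink.isAttracting [FiniteDimensional ℝ E] {η : Flow ℝ E} (hη : IsFlowOf η f)
    (hp : IsSink f p) (hd : DifferentiableAt ℝ f p) : IsAttracting η p := by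
  obtain ⟨c, hc, hest⟩ := hp.exists_mul_sq_norm_le_neg_inner hd
  obtain ⟨ρ, hρ, hin⟩ := nhds_basis_closedBall.eventually_iff.1 hest
  have hdecay : Tendsto (fun t => ρ ^ 2 * Real.exp (-c * t)) atTop (𝓝 0) := by
    simpa using (Real.tendsto_exp_atBot.comp
      (tendsto_id.const_mul_atTop_of_neg (neg_neg_of_pos hc))).const_mul (ρ ^ 2)
  refine ⟨closedBall p ρ, closedBall_mem_nhds p hρ, ?_⟩
  have hbound : ∀ᶠ q : E × ℝ in 𝓟 (closedBall p ρ) ×ˢ atTop,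
      ‖η q.2 q.1 - p‖ ^ 2 ≤ ρ ^ 2 * Real.exp (-c * q.2) := by
    filter_upwards [prod_mem_prod (mem_principal_self _) (Ici_mem_atTop 0)] with q hq
    refine sq_norm_sub_le_of_mul_sq_norm_le_neg_inner hc hρ (hη q.1) ?_ (fun _ h => hin h) hq.2
    simpa only [η.map_zero_apply] using hq.1
  have hsq := squeeze_zero' (Eventually.of_forall fun _ => sq_nonneg _) hbound
    (hdecay.comp tendsto_snd)
  refine tendsto_iff_norm_sub_tendsto_zero.2 ?_
  simpa using hsq.sqrt

theorem IsSource.isAttracting_reverse [FiniteDimensional ℝ E] {η : Flow ℝ E} (hη : IsFlowOf η f)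
    (hp : IsSource f p) (hd : DifferentiableAt ℝ f p) : IsAttracting η.reverse p :=
  (isSink_neg_iff.2 hp).isAttracting hη.reverse hd.neg

end SourcesAndSinks

section GradientFlow

variable {E : Type*} [NormedAddCommGroup E] [InnerProductSpace ℝ E] [CompleteSpace E]
  {φ χ : E → ℝ} {f : E → E} {γ : ℝ → E} {η : Flow ℝ E} {K : Set E} {x z p : E} {δ M R : ℝ}

lemma hasDerivAt_potential (hφ : ∀ z, HasGradientAt φ (f z) z)
    (hγ : IsIntegralCurve γ fun _ => χ • f) (t : ℝ) :
    HasDerivAt (fun t => φ (γ t)) (χ (γ t) * ‖f (γ t)‖ ^ 2) t := by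
  refine ((hφ (γ t)).hasFDerivAt.comp_hasDerivAt t (hγ t)).congr_deriv ?_
  simp

lemma monotone_potential (hφ : ∀ z, HasGradientAt φ (f z) z) (hχ : 0 ≤ χ)
    (hγ : IsIntegralCurve γ fun _ => χ • f) : Monotone fun t => φ (γ t) := by
  have hderiv := hasDerivAt_potential hφ hγ
  refine monotone_of_deriv_nonneg (fun t => (hderiv t).differentiableAt) fun t => ?_
  rw [(hderiv t).deriv]
  exact mul_nonneg (hχ _) (sq_nonneg _)

lemma eq_zero_of_potential_const (hφ : ∀ z, HasGradientAt φ (f z) z)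
    (hη : IsFlowOf η (χ • f)) (hχp : 0 < χ p) (hconst : ∀ t, φ (η t p) = φ p) : f p = 0 := by
  have hderiv := hasDerivAt_potential hφ (hη p) 0
  simp only [hconst, η.map_zero_apply] at hderiv
  simpa [hχp.ne'] using hderiv.unique (hasDerivAt_const 0 (φ p))

lemma exists_tendsto_zero_of_eventually_mem (hφ : ∀ z, HasGradientAt φ (f z) z)
    (hcrit : InjOn φ {p | f p = 0}) (hχ : 0 ≤ χ) (hη : IsFlowOf η (χ • f)) (hK : IsCompact K)
    (hχK : ∀ p ∈ K, 0 < χ p) (hzK : ∀ᶠ t in atTop, η t z ∈ K) :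
    ∃ p ∈ K, f p = 0 ∧ Tendsto (fun t => η t z) atTop (𝓝 p) := by
  have hφc : Continuous φ := continuous_iff_continuousAt.2 fun z => (hφ z).continuousAt
  have hzero : {p ∈ K | ∀ t, φ (η t p) = φ p} ⊆ {p | f p = 0} := fun p hp =>
    eq_zero_of_potential_const hφ hη (hχK p hp.1) hp.2
  obtain ⟨p, hpK, hconst, hlim⟩ := exists_tendsto_of_monotone_of_injOn hφc
    (monotone_potential hφ hχ (hη z)) hK hzK (hcrit.mono hzero)
  exact ⟨p, hpK, hzero ⟨hpK, hconst⟩, hlim⟩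

lemma eventually_lt_potential (hφ : ∀ z, HasGradientAt φ (f z) z) (hχ : 0 ≤ χ)
    (hη : IsFlowOf η (χ • f)) {s : ℝ} (hs : M < φ (η s z)) :
    ∀ᶠ q : E × ℝ in 𝓝 z ×ˢ atTop, M < φ (η q.2 q.1) := by
  have hnear : ∀ᶠ w in 𝓝 z, M < φ (η s w) :=
    ((hφ (η s z)).continuousAt.comp (η.continuous_toFun s).continuousAt).eventually_const_lt hs
  filter_upwards [hnear.prod_mk (eventually_ge_atTop s)] with q hq
  exact hq.1.trans_le (monotone_potential hφ hχ (hη q.1) hq.2)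

-- Outside the ball `‖z‖ ≤ R` the speed `χ ‖f‖` is at most `χ ‖f‖² / δ`, the rate of `φ / δ`.
lemma norm_le_add_potential_sub_div (hφ : ∀ z, HasGradientAt φ (f z) z) (hχ : 0 ≤ χ)
    (hγ : IsIntegralCurve γ fun _ => χ • f) (hδ : 0 < δ) (hδf : ∀ z, R ≤ ‖z‖ → δ ≤ ‖f z‖)
    (h0 : ‖γ 0‖ ≤ R) {t : ℝ} (ht : 0 ≤ t) :
    ‖γ t‖ ≤ R + (φ (γ t) - φ (γ 0)) / δ := by
  have hbarrier : ∀ ε > 0, ‖γ t‖ ≤ R + (φ (γ t) - φ (γ 0)) / δ + ε * t := by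
    intro ε hε
    have hderiv : ∀ s, HasDerivAt (fun s => R + (φ (γ s) - φ (γ 0)) / δ + ε * s)
        (χ (γ s) * ‖f (γ s)‖ ^ 2 / δ + ε) s := fun s => by
      simpa using ((((hasDerivAt_potential hφ hγ s).sub_const _).div_const δ).const_add R).fun_add
        ((hasDerivAt_id s).const_mul ε)
    refine image_norm_le_of_norm_deriv_right_lt_deriv_boundary (a := 0) (b := t)
      hγ.continuous.continuousOn (fun s _ => (hγ s).hasDerivWithinAt) (by simpa using h0)
      hderiv ?_ ⟨ht, le_rfl⟩
    intro s hs htouch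
    have hincr : 0 ≤ (φ (γ s) - φ (γ 0)) / δ :=
      div_nonneg (sub_nonneg.2 (monotone_potential hφ hχ hγ hs.1)) hδ.le
    have hfs : δ ≤ ‖f (γ s)‖ := hδf _ (by rw [htouch]; nlinarith [hs.1])
    calc ‖(χ • f) (γ s)‖ = χ (γ s) * ‖f (γ s)‖ := by
          rw [Pi.smul_apply', norm_smul, Real.norm_of_nonneg (hχ _)]
      _ = χ (γ s) * (‖f (γ s)‖ * δ) / δ := by field_simp
      _ ≤ χ (γ s) * ‖f (γ s)‖ ^ 2 / δ := by
          have := hχ (γ s)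
          rw [sq]
          gcongr
      _ < χ (γ s) * ‖f (γ s)‖ ^ 2 / δ + ε := lt_add_of_pos_right _ hε
  have hlim : Tendsto (fun ε => R + (φ (γ t) - φ (γ 0)) / δ + ε * t) (𝓝[>] 0)
      (𝓝 (R + (φ (γ t) - φ (γ 0)) / δ)) := by
    refine Tendsto.mono_left ?_ nhdsWithin_le_nhds
    exact Continuous.tendsto' (by fun_prop) _ _ (by simp)
  exact ge_of_tendsto hlim (eventually_mem_nhdsWithin.mono hbarrier)

lemma norm_le_of_mem_unstableSet (hφ : ∀ z, HasGradientAt φ (f z) z) (hχ : 0 ≤ χ)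
    (hη : IsFlowOf η (χ • f)) (hδ : 0 < δ) (hδf : ∀ z, R ≤ ‖z‖ → δ ≤ ‖f z‖) (hxR : ‖x‖ < R)
    (hz : z ∈ unstableSet η x) (hM : ∀ t, φ (η t z) ≤ M) (t : ℝ) :
    ‖η t z‖ ≤ R + (M - φ x) / δ := by
  obtain ⟨s, hsR, hst⟩ :=
    ((hz.norm.eventually_lt_const hxR).and (eventually_le_atBot t)).exists
  have hxs : φ x ≤ φ (η s z) := (monotone_potential hφ hχ (hη z)).le_of_tendsto
    ((hφ x).continuousAt.tendsto.comp hz) s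
  have hbound := norm_le_add_potential_sub_div hφ hχ (hη (η s z)) hδ hδf
    (by simpa only [η.map_zero_apply] using hsR.le) (sub_nonneg.2 hst)
  simp only [← η.map_add, sub_add_cancel, zero_add] at hbound
  refine hbound.trans ?_
  gcongr
  exact hM t

end GradientFlow

section SaddleConnection

variable {E : Type*} [NormedAddCommGroup E] [InnerProductSpace ℝ E]

lemma exists_isCompact_isPreconnected_disjoint_countable (hE : 1 < Module.rank ℝ E) {S : Set E}
    (hS : S.Countable) {x y : E} (hx : x ∉ S) (hy : y ∉ S) :
    ∃ Γ : Set E, IsCompact Γ ∧ IsPreconnected Γ ∧ x ∈ Γ ∧ y ∈ Γ ∧ Disjoint Γ S := by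
  have hjoin : JoinedIn Sᶜ x y :=
    (hS.isPathConnected_compl_of_one_lt_rank hE).joinedIn x hx y hy
  refine ⟨range hjoin.somePath, isCompact_range hjoin.somePath.continuous,
    isPreconnected_range hjoin.somePath.continuous, ⟨0, hjoin.somePath.source⟩,
    ⟨1, hjoin.somePath.target⟩, ?_⟩
  rw [disjoint_left]
  rintro _ ⟨t, rfl⟩
  exact hjoin.somePath_mem t

lemma exists_norm_lt_and_forall_of_eventually_cocompact {F : Type*} [NormedAddCommGroup F]
    [ProperSpace F] {P : F → Prop} (hP : ∀ᶠ z in cocompact F, P z) (x : F) :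
    ∃ R, ‖x‖ < R ∧ ∀ z, R ≤ ‖z‖ → P z := by
  rw [← cobounded_eq_cocompact, hasBasis_cobounded_norm.eventually_iff] at hP
  obtain ⟨R, -, hR⟩ := hP
  exact ⟨max R (‖x‖ + 1), lt_max_of_lt_right (lt_add_one _),
    fun z hz => hR ((le_max_left _ _).trans hz)⟩

variable {φ χ : E → ℝ} {f : E → E} {η : Flow ℝ E} {Γ : Set E} {p z : E} {M R r : ℝ}

lemma eventuallyEq_cutoff_smul (hχR : ∀ z ∈ ball 0 R, χ z = 1) (hp : p ∈ ball 0 R) :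
    f =ᶠ[𝓝 p] χ • f := by
  filter_upwards [isOpen_ball.mem_nhds hp] with z hz
  simp [hχR z hz]

variable [FiniteDimensional ℝ E]

lemma exists_cutoff_flow (hf : ContDiff ℝ 1 f) (R : ℝ) :
    ∃ (χ : E → ℝ) (η : Flow ℝ E), 0 ≤ χ ∧ (∀ z ∈ ball 0 R, χ z = 1) ∧ IsFlowOf η (χ • f) ∧
      ∀ p, f p = 0 → ∀ t, η t p = p := by
  let b : ContDiffBump (0 : E) := ⟨max R 1, max R 1 + 1, by positivity, lt_add_one _⟩
  have hC : ContDiff ℝ 1 ((b : E → ℝ) • f) := b.contDiff.smul hf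
  have hs : HasCompactSupport ((b : E → ℝ) • f) := b.hasCompactSupport.smul_right
  obtain ⟨η, hη⟩ := exists_isFlowOf_of_hasCompactSupport hC hs
  obtain ⟨K, hK⟩ := hC.lipschitzWith_of_hasCompactSupport hs one_ne_zero
  refine ⟨b, η, fun z => b.nonneg, fun z hz => b.one_of_mem_closedBall ?_, hη,
    fun p hp => hη.flow_eq_self_of_eq_zero hK (by simp [hp])⟩
  exact closedBall_subset_closedBall (le_max_left _ _) (ball_subset_closedBall hz)

lemma IsSink.isAttracting_of_cutoff (hf : Differentiable ℝ f) (hη : IsFlowOf η (χ • f))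
    (hχR : ∀ z ∈ ball 0 R, χ z = 1) (hpR : p ∈ ball 0 R) (hp : IsSink f p) :
    IsAttracting η p :=
  have heq := eventuallyEq_cutoff_smul hχR hpR
  (hp.congr heq).isAttracting hη ((hf p).congr_of_eventuallyEq heq.symm)

lemma IsSource.isAttracting_reverse_of_cutoff (hf : Differentiable ℝ f)
    (hη : IsFlowOf η (χ • f)) (hχR : ∀ z ∈ ball 0 R, χ z = 1) (hpR : p ∈ ball 0 R)
    (hp : IsSource f p) : IsAttracting η.reverse p :=
  have heq := eventuallyEq_cutoff_smul hχR hpR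
  (hp.congr heq).isAttracting_reverse hη ((hf p).congr_of_eventuallyEq heq.symm)

lemma tendsto_sink_or_saddle_of_norm_le (hφ : ∀ z, HasGradientAt φ (f z) z)
    (hf : Differentiable ℝ f) (hcrit : InjOn φ {p | f p = 0}) (hχ : 0 ≤ χ)
    (hη : IsFlowOf η (χ • f)) (hχR : ∀ z ∈ ball 0 R, χ z = 1) (hrR : r < R)
    (hz : f z ≠ 0) (hzr : ∀ t, ‖η t z‖ ≤ r) :
    IsIntegralCurve (fun t => η t z) (fun _ => f) ∧
      ∃ p ∈ ball 0 R, (IsSink f p ∨ IsSaddle f p) ∧ Tendsto (fun t => η t z) atTop (𝓝 p) := by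
  have hrB : closedBall (0 : E) r ⊆ ball 0 R := closedBall_subset_ball hrR
  have hzB : ∀ t, η t z ∈ closedBall 0 r := fun t => mem_closedBall_zero_iff.2 (hzr t)
  refine ⟨fun t => by simpa [hχR _ (hrB (hzB t))] using hη z t, ?_⟩
  obtain ⟨p, hp, hfp, hlim⟩ := exists_tendsto_zero_of_eventually_mem hφ hcrit hχ hη
    (isCompact_closedBall (0 : E) r) (fun p hp => (hχR p (hrB hp)).symm ▸ one_pos)
    (Eventually.of_forall hzB)
  have hsource : ¬ IsSource f p := fun hps =>
    hz ((hps.isAttracting_reverse_of_cutoff hf hη hχR (hrB hp)).eq_of_tendsto_atTop hlim ▸ hfp)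
  exact ⟨p, hrB hp, or_iff_not_imp_left.2 fun hsink => ⟨hfp, hsource, hsink⟩, hlim⟩

lemma tendsto_saddle_or_eventually_notMem (hφ : ∀ z, HasGradientAt φ (f z) z)
    (hf : Differentiable ℝ f) (hcrit : InjOn φ {p | f p = 0}) (hχ : 0 ≤ χ)
    (hη : IsFlowOf η (χ • f)) (hχR : ∀ z ∈ ball 0 R, χ z = 1) (hrR : r < R)
    (hΓ : IsClosed Γ) (hΓM : ∀ w ∈ Γ, φ w ≤ M) (hΓsink : Disjoint Γ {p | IsSink f p})
    (hz : f z ≠ 0) (hzr : (∀ t, φ (η t z) ≤ M) → ∀ t, ‖η t z‖ ≤ r) :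
    (∃ y, IsSaddle f y ∧ IsIntegralCurve (fun t => η t z) (fun _ => f) ∧
      Tendsto (fun t => η t z) atTop (𝓝 y)) ∨
    ∀ᶠ q : E × ℝ in 𝓝 z ×ˢ atTop, η q.2 q.1 ∉ Γ := by
  by_cases hM : ∀ t, φ (η t z) ≤ M
  · obtain ⟨hγ, p, hpR, hp | hp, hlim⟩ :=
      tendsto_sink_or_saddle_of_norm_le hφ hf hcrit hχ hη hχR hrR hz (hzr hM)
    · have hattr := hp.isAttracting_of_cutoff hf hη hχR hpR
      exact .inr ((hattr.tendsto_prod hlim).eventually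
        (hΓ.isOpen_compl.mem_nhds (disjoint_right.1 hΓsink hp)))
    · exact .inl ⟨p, hp, hγ, hlim⟩
  · push Not at hM
    obtain ⟨s, hs⟩ := hM
    exact .inr ((eventually_lt_potential hφ hχ hη hs).mono fun q hq hqΓ => hq.not_ge (hΓM _ hqΓ))

end SaddleConnection

theorem source_connected_to_saddle_general {E : Type*} [NormedAddCommGroup E]
    [InnerProductSpace ℝ E] [FiniteDimensional ℝ E] (hE : 1 < Module.rank ℝ E)
    {φ : E → ℝ} {f : E → E} (hφ : ∀ z, HasGradientAt φ (f z) z) (hf : ContDiff ℝ 1 f)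
    (hcrit : InjOn φ {p | f p = 0})
    {δ : ℝ} (hδ : 0 < δ) (hδf : ∀ᶠ z in cocompact E, δ ≤ ‖f z‖)
    {x y₀ : E} (hx : IsSource f x) (hy₀ : f y₀ = 0) (hne : y₀ ≠ x) (hsink : ¬ IsSink f y₀) :
    ∃ (y : E) (γ : ℝ → E), IsSaddle f y ∧ IsIntegralCurve γ (fun _ => f) ∧
      Tendsto γ atBot (𝓝 x) ∧ Tendsto γ atTop (𝓝 y) := by
  have hfd : Differentiable ℝ f := hf.differentiable one_ne_zero
  have : Nontrivial E := nontrivial_of_ne y₀ x hne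
  obtain ⟨Γ, hΓc, hΓ, hxΓ, hy₀Γ, hΓsink⟩ := exists_isCompact_isPreconnected_disjoint_countable hE
    (countable_setOf_isSink hfd) (x := x) (y := y₀) hx.not_isSink hsink
  obtain ⟨M, hM⟩ := hΓc.bddAbove_image fun z _ => (hφ z).continuousAt.continuousWithinAt
  have hΓM : ∀ w ∈ Γ, φ w ≤ M := forall_mem_image.1 hM
  obtain ⟨R₀, hxR₀, hR₀⟩ := exists_norm_lt_and_forall_of_eventually_cocompact hδf x
  set r := R₀ + (M - φ x) / δ
  have hxr : ‖x‖ < r := hxR₀.trans_le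
    (le_add_of_nonneg_right (div_nonneg (sub_nonneg.2 (hΓM x hxΓ)) hδ.le))
  obtain ⟨χ, η, hχ, hχR, hη, hfix⟩ := exists_cutoff_flow hf (r + 1)
  have hxW : unstableSet η x ∈ 𝓝 x := (hx.isAttracting_reverse_of_cutoff hfd hη hχR
    (mem_ball_zero_iff.2 (hxr.trans (lt_add_one r)))).unstableSet_mem_nhds
  obtain ⟨ρ, hρ, hρW⟩ := nhds_basis_closedBall.mem_iff.1 hxW
  by_contra hno
  have hescape : ∀ z ∈ frontier (closedBall x ρ),
      ∀ᶠ q : E × ℝ in 𝓝 z ×ˢ atTop, η q.2 q.1 ∉ Γ := by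
    intro z hz
    have hzW : z ∈ unstableSet η x := hρW (isClosed_closedBall.frontier_subset hz)
    have hzx : z ≠ x := by
      rintro rfl
      exact hz.2 (mem_interior_iff_mem_nhds.2 (closedBall_mem_nhds z hρ))
    have hfz : f z ≠ 0 := fun h => hzx (eq_of_mem_unstableSet_of_fixed hzW (hfix z h))
    refine (tendsto_saddle_or_eventually_notMem hφ hfd hcrit hχ hη hχR (lt_add_one r)
      hΓc.isClosed hΓM hΓsink hfz
      (norm_le_of_mem_unstableSet hφ hχ hη hδ hR₀ hxR₀ hzW)).resolve_left ?_
    rintro ⟨y, hy, hγ, hlim⟩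
    exact hno ⟨y, _, hy, hγ, hzW, hlim⟩
  have hΓW := subset_unstableSet_of_isPreconnected hΓ hxΓ (isCompact_closedBall x ρ)
    (closedBall_mem_nhds x hρ) hρW hescape
  exact hne (eq_of_mem_unstableSet_of_fixed (hΓW hy₀Γ) (hfix y₀ hy₀))

section GenericGradient

variable {n : ℕ} {f : Euc n → Euc n} {φ : Euc 2 → ℝ} {g : Euc 2 → Euc 2}

lemma IsProper.tendsto_cocompact (hf : IsProper f) :
    Tendsto f (cocompact (Euc n)) (cocompact (Euc n)) :=
  (hasBasis_cocompact.tendsto_iff hasBasis_cocompact).2 fun K hK =>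
    ⟨f ⁻¹' K, hf K hK, fun _ hz => hz⟩

lemma IsGenericGradientPair.hasGradientAt (h : IsGenericGradientPair φ g) (z : Euc 2) :
    HasGradientAt φ (g z) z :=
  h.2.1 z ▸ (h.1.differentiable two_ne_zero z).hasGradientAt

lemma IsGenericGradientPair.contDiff (h : IsGenericGradientPair φ g) : ContDiff ℝ 1 g := by
  have hgrad : gradient φ = g := funext h.2.1
  rw [← hgrad]
  exact (InnerProductSpace.toDual ℝ (Euc 2)).symm.contDiff.comp
    (h.1.fderiv_right one_add_one_eq_two.le)

lemma IsGenericGradientPair.injOn_zeros (h : IsGenericGradientPair φ g) :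
    InjOn φ {p | g p = 0} := fun p hp q hq =>
  h.2.2.2.1 p q hp hq

end GenericGradient

lemma one_lt_rank_euc_two : 1 < Module.rank ℝ (Euc 2) := by
  rw [← Module.finrank_eq_rank]
  simp

/-- if `f = ∇φ` is a generic proper gradient map, `x` is a source and the set
of saddles is nonempty, then some saddle `y` is connected to `x` by a trajectory of the
local flow: there is a full trajectory tending to `x` as `t → -∞` and to `y` as `t → ∞`. -/
theorem source_connected_to_saddle (φ : Euc 2 → ℝ) (f : Euc 2 → Euc 2)
    (hgen : IsGenericGradientPair φ f) (hprop : IsProper f)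
    (x : Euc 2) (hx : IsSourceAt f x) (hB : (saddleSet f).Nonempty) :
    ∃ (y : Euc 2) (γ : ℝ → Euc 2), IsSaddleAt f y ∧ IsTrajectory f γ ∧
      Filter.Tendsto γ Filter.atBot (nhds x) ∧ Filter.Tendsto γ Filter.atTop (nhds y) := by
  obtain ⟨y₀, hy₀, hy₀_source, hy₀_sink⟩ := hB
  exact source_connected_to_saddle_general one_lt_rank_euc_two hgen.hasGradientAt hgen.contDiff
    hgen.injOn_zeros one_pos
    ((tendsto_norm_cocompact_atTop.comp hprop.tendsto_cocompact).eventually_ge_atTop 1)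
    hx hy₀ (fun h => hy₀_source (h ▸ hx)) hy₀_sink
end
end
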